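/- arXiv:2511.18959 — 2 statements merged into one kernel-verified Lean document; each statement's English description precedes it below -/
import Mathlib

section
/- Let W, V be abelian groups, let ≤ be a linear order on the set of all subsets of [r], and let 𝔢_I : W → V and 𝔣_I : V → W (I ⊆ [r]) be additive maps such that 𝔣_I ∘ 𝔢_J = δ_{IJ}·id_W whenever J ≤ I. Define e_I := 𝔢_I and f_I := 𝔣_I ∘ (id_V − 𝔢_{J_1}∘𝔣_{J_1}) ∘ ⋯ ∘ (id_V − 𝔢_{J_m}∘𝔣_{J_m}), where J_1 < ⋯ < J_m enumerates the subsets J with I < J. Then the following are equivalent: (1) the map ⊕_{I ⊆ [r]} W → V sending (w_I)_I to Σ_I e_I(w_I) is bijective; (2) (id_V − 𝔢_{K_1}∘𝔣_{K_1}) ∘ ⋯ ∘ (id_V − 𝔢_{K_N}∘𝔣_{K_N}) = 0, where K_1 < ⋯ < K_N enumerates all subsets of [r] in increasing order; (3) there exists a Cl(r)-representation (p_i, q_i) on V such that, setting e := e_∅ : W → V and f := f_∅ : V → W, one has e_I = q_I ∘ e and f_I = f ∘ p_I for all I ⊆ [r], together with p_i ∘ e = 0 and f ∘ q_i = 0 for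 all i ∈ [r], f ∘ e = id_W, and e ∘ f = p_{[r]} ∘ q_{[r]}. -/
/-!
Statement 4: equivalent characterizations of when a semi-orthogonal family of maps induces
a decomposition: bijectivity of `⊕_I W → V`, vanishing of the full ordered product, and
existence of a Clifford algebra representation producing the (orthogonalized) maps.

The linear order on the set of all subsets of `[r]` is encoded by an arbitrary
bijection `π : Finset (Fin r) ≃ Fin (2 ^ r)`:  `I ≤ J` iff `π I ≤ π J`.
-/

/-- View an additive endomorphism as an element of the endomorphism ring. -/
def toEnd {V : Type*} [AddCommGroup V] (f : V →+ V) : AddMonoid.End V := f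

/-- The ordered product `q_I = q_{a_0} ∘ q_{a_1} ∘ ⋯ ∘ q_{a_k}` for `I = {a_0 < ⋯ < a_k}`. -/
def qProd {r : ℕ} {V : Type*} [AddCommGroup V] (q : Fin r → AddMonoid.End V)
    (I : Finset (Fin r)) : AddMonoid.End V :=
  ((I.sort (· ≤ ·)).map q).prod

/-- The ordered product `p_I = p_{a_k} ∘ p_{a_{k-1}} ∘ ⋯ ∘ p_{a_0}` for `I = {a_0 < ⋯ < a_k}`. -/
def pProd {r : ℕ} {V : Type*} [AddCommGroup V] (p : Fin r → AddMonoid.End V)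
    (I : Finset (Fin r)) : AddMonoid.End V :=
  ((I.sort (· ≤ ·)).reverse.map p).prod

/-- A `Cl(r)`-representation on an abelian group `V`. -/
def IsCliffordRep {r : ℕ} {V : Type*} [AddCommGroup V] (p q : Fin r → AddMonoid.End V) : Prop :=
  (∀ i, p i * p i = 0) ∧ (∀ i, q i * q i = 0) ∧
    (∀ i j, p i * p j + p j * p i = 0) ∧
    (∀ i j, q i * q j + q j * q i = 0) ∧
    (∀ i j, p i * q j + q j * p i = if i = j then 1 else 0)

/-- The ordered product `(1 - 𝔢_{J₁}∘𝔣_{J₁}) ∘ ⋯ ∘ (1 - 𝔢_{J_m}∘𝔣_{J_m})`, where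
`J₁ < ⋯ < J_m` enumerates the subsets `J` with `I < J` in increasing order. -/
def afterProd {r : ℕ} {W V : Type*} [AddCommGroup W] [AddCommGroup V]
    (π : Finset (Fin r) ≃ Fin (2 ^ r))
    (fe : Finset (Fin r) → W →+ V) (ff : Finset (Fin r) → V →+ W)
    (I : Finset (Fin r)) : AddMonoid.End V :=
  (((List.finRange (2 ^ r)).filter (fun s => π I < s)).map
    (fun s => (1 : AddMonoid.End V) - toEnd ((fe (π.symm s)).comp (ff (π.symm s))))).prod

/-- The orthogonalization `f_I := 𝔣_I ∘ (1 - 𝔢_{J₁}∘𝔣_{J₁}) ∘ ⋯ ∘ (1 - 𝔢_{J_m}∘𝔣_{J_m})`. -/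
def orthF {r : ℕ} {W V : Type*} [AddCommGroup W] [AddCommGroup V]
    (π : Finset (Fin r) ≃ Fin (2 ^ r))
    (fe : Finset (Fin r) → W →+ V) (ff : Finset (Fin r) → V →+ W)
    (I : Finset (Fin r)) : V →+ W :=
  (ff I).comp (afterProd π fe ff I)

/-- The full ordered product `(1 - 𝔢_{K₁}∘𝔣_{K₁}) ∘ ⋯ ∘ (1 - 𝔢_{K_N}∘𝔣_{K_N})` over all
subsets of `[r]` in increasing order. -/
def fullProd {r : ℕ} {W V : Type*} [AddCommGroup W] [AddCommGroup V]
    (π : Finset (Fin r) ≃ Fin (2 ^ r))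
    (fe : Finset (Fin r) → W →+ V) (ff : Finset (Fin r) → V →+ W) : AddMonoid.End V :=
  ((List.finRange (2 ^ r)).map
    (fun s => (1 : AddMonoid.End V) - toEnd ((fe (π.symm s)).comp (ff (π.symm s))))).prod

/-!
Telescoping writes the full product as `1 - ∑ I, e_I ∘ f_I`, and semiorthogonality makes the
orthogonalized `f_I` dual to the `e_I`. So both the bijectivity of `⊕ W → V` and the vanishing of
the full product say that `∑ I, e_I ∘ f_I = 1`.

In that case `V` is the fermionic Fock space `⊕_I e_I W` over the vacuum `e_∅ W`, and annihilation
and creation operators with Koszul signs form the required Clifford representation. Conversely,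
a Clifford representation turns `e_I ∘ f_I` into `q_I ∘ p_[r] ∘ q_[r] ∘ p_I`, and
`∑ I ⊆ T, q_I p_T q_T p_I = 1` follows by induction on `T`: adjoining a new largest index `a`
replaces `E = p_T q_T`, which commutes with `p_a` and `q_a`, by `p_a E q_a = E p_a q_a`, and
`p_a q_a + q_a (p_a q_a) p_a = p_a q_a + q_a p_a = 1`.
-/

section OrderedProducts

theorem prod_map_one_sub_eq_one_sub_sum {ι R : Type*} [LinearOrder ι] [Ring R] (x : ι → R)
    {l : List ι} (hl : l.SortedLT) :
    (l.map (1 - x ·)).prod =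
      1 - (l.map fun s ↦ x s * ((l.filter (s < ·)).map (1 - x ·)).prod).sum := by
  induction l with
  | nil => simp
  | cons a t ih =>
    obtain ⟨ha, ht⟩ := List.pairwise_cons.1 hl.pairwise
    have filter_head : (a :: t).filter (a < ·) = t := by simpa using ha
    have filter_tail : ∀ s ∈ t, (a :: t).filter (s < ·) = t.filter (s < ·) := fun s hs ↦
      List.filter_cons_of_neg (by simpa using (ha s hs).le)
    have sum_tail : (t.map fun s ↦ x s * (((a :: t).filter (s < ·)).map (1 - x ·)).prod) =
        t.map fun s ↦ x s * ((t.filter (s < ·)).map (1 - x ·)).prod :=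
      List.map_congr_left fun s hs ↦ by rw [filter_tail s hs]
    rw [List.map_cons, List.prod_cons, List.map_cons, List.sum_cons, filter_head, sum_tail,
      sub_mul, one_mul, sub_add_eq_sub_sub_swap, ← ih ht.sortedLT]

variable {ι V : Type*} [AddCommGroup V] (x : ι → AddMonoid.End V) {l : List ι} {v : V}

theorem prod_map_one_sub_apply_of_forall_eq_zero (h : ∀ s ∈ l, x s v = 0) :
    (l.map (1 - x ·)).prod v = v := by
  induction l with
  | nil => simp
  | cons a t ih =>
    obtain ⟨ha, ht⟩ := List.forall_mem_cons.1 h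
    rw [List.map_cons, List.prod_cons, AddMonoid.End.coe_mul, Function.comp_apply, ih ht]
    exact (congrArg (v - ·) ha).trans (sub_zero v)

theorem prod_map_one_sub_apply_eq_zero [LinearOrder ι] (hl : l.SortedLT) {k : ι} (hk : k ∈ l)
    (h_self : x k v = v) (h_gt : ∀ s ∈ l, k < s → x s v = 0) :
    (l.map (1 - x ·)).prod v = 0 := by
  induction l with
  | nil => simp at hk
  | cons a t ih =>
    obtain ⟨ha, ht⟩ := List.pairwise_cons.1 hl.pairwise
    rw [List.map_cons, List.prod_cons, AddMonoid.End.coe_mul, Function.comp_apply]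
    rcases List.mem_cons.1 hk with rfl | hk
    · rw [prod_map_one_sub_apply_of_forall_eq_zero x fun s hs ↦
        h_gt s (List.mem_cons_of_mem _ hs) (ha s hs)]
      exact sub_eq_zero.2 h_self.symm
    · rw [ih ht.sortedLT hk fun s hs ↦ h_gt s (List.mem_cons_of_mem _ hs), map_zero]

end OrderedProducts

/-- The families `e_I : W → V` and `f_I : V → W` are dual to each other: `f_I ∘ e_J = δ_{IJ}`. -/
def IsBiorthogonal {ι W V : Type*} [DecidableEq ι] [AddCommMonoid W] [AddCommMonoid V]
    (e : ι → W →+ V) (f : ι → V →+ W) : Prop :=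
  ∀ I J, (f I).comp (e J) = if I = J then AddMonoidHom.id W else 0

namespace IsBiorthogonal

variable {ι W V : Type*} [DecidableEq ι] [AddCommMonoid W] [AddCommMonoid V]
  {e : ι → W →+ V} {f : ι → V →+ W}

theorem apply_apply (h : IsBiorthogonal e f) (I J : ι) (w : W) :
    f I (e J w) = if I = J then w else 0 := by
  rw [← AddMonoidHom.comp_apply, h I J]
  split_ifs <;> rfl

variable [Fintype ι]

theorem apply_sum (h : IsBiorthogonal e f) (g : ι → W) (I : ι) :
    f I (∑ J, e J (g J)) = g I := by
  simp [h.apply_apply]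

theorem bijective_sum_iff (h : IsBiorthogonal e f) :
    Function.Bijective (fun g : ι → W ↦ ∑ I, e I (g I)) ↔
      ∑ I, (e I).comp (f I) = AddMonoidHom.id V := by
  simp only [DFunLike.ext_iff, AddMonoidHom.finsetSum_apply, AddMonoidHom.comp_apply,
    AddMonoidHom.id_apply]
  refine ⟨fun hbij v ↦ ?_, fun hsum ↦ ⟨fun g g' hgg' ↦ ?_, fun v ↦ ⟨_, hsum v⟩⟩⟩
  · obtain ⟨g, rfl⟩ := hbij.surjective v
    simp only [h.apply_sum]
  · ext I
    rw [← h.apply_sum g, ← h.apply_sum g']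
    exact congrArg (f I) hgg'

end IsBiorthogonal

theorem hom_ext_of_sum_comp_eq_id {ι W V X : Type*} [Fintype ι] [AddCommMonoid W] [AddCommMonoid V]
    [AddCommMonoid X] {e : ι → W →+ V} {f : ι → V →+ W}
    (hsum : ∑ I, (e I).comp (f I) = AddMonoidHom.id V) {a b : V →+ X}
    (hab : ∀ I w, a (e I w) = b (e I w)) : a = b := by
  ext v
  rw [← AddMonoidHom.id_apply V v, ← hsum]
  simp only [AddMonoidHom.finsetSum_apply, AddMonoidHom.comp_apply, map_sum, hab]

section Orthogonalization

variable {r : ℕ} {W V : Type*} [AddCommGroup W] [AddCommGroup V]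
  (π : Finset (Fin r) ≃ Fin (2 ^ r))
  (fe : Finset (Fin r) → W →+ V) (ff : Finset (Fin r) → V →+ W)

theorem fullProd_eq_id_sub_sum :
    fullProd π fe ff = AddMonoidHom.id V - ∑ I, (fe I).comp (orthF π fe ff I) := by
  refine (prod_map_one_sub_eq_one_sub_sum _ (List.sortedLT_finRange (2 ^ r))).trans ?_
  rw [← Fin.sum_univ_def, ← Equiv.sum_comp π]
  simp only [Equiv.symm_apply_apply]
  rfl

theorem fullProd_eq_zero_iff :
    fullProd π fe ff = 0 ↔ ∑ I, (fe I).comp (orthF π fe ff I) = AddMonoidHom.id V := by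
  rw [fullProd_eq_id_sub_sum]
  exact sub_eq_zero.trans eq_comm

variable {π fe ff}

theorem isBiorthogonal_orthF
    (hso : ∀ I J, π J ≤ π I → (ff I).comp (fe J) = if I = J then AddMonoidHom.id W else 0) :
    IsBiorthogonal fe (orthF π fe ff) := by
  intro I J
  let x (s : Fin (2 ^ r)) : AddMonoid.End V := toEnd ((fe (π.symm s)).comp (ff (π.symm s)))
  have x_self (w : W) : x (π J) (fe J w) = fe J w := by
    change fe (π.symm (π J)) (((ff (π.symm (π J))).comp (fe J)) w) = fe J w
    rw [π.symm_apply_apply, hso J J le_rfl, if_pos rfl, AddMonoidHom.id_apply]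
  have x_gt (w : W) (s : Fin (2 ^ r)) (hs : π J < s) : x s (fe J w) = 0 := by
    have hne : π.symm s ≠ J := fun h ↦ hs.ne (by simp [← h])
    change fe (π.symm s) (((ff (π.symm s)).comp (fe J)) w) = 0
    rw [hso _ J (by simpa using hs.le), if_neg hne, AddMonoidHom.zero_apply, map_zero]
  rcases le_or_gt (π J) (π I) with hJI | hIJ
  · rw [← hso I J hJI]
    ext w
    refine congrArg (ff I) (prod_map_one_sub_apply_of_forall_eq_zero x fun s hs ↦ ?_)
    exact x_gt w s (hJI.trans_lt (by simpa using hs))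
  · have hne : I ≠ J := fun h ↦ hIJ.ne (congrArg π h)
    rw [if_neg hne]
    ext w
    refine (congrArg (ff I) (prod_map_one_sub_apply_eq_zero x ?_ ?_ (x_self w)
      fun s _ ↦ x_gt w s)).trans (map_zero _)
    · exact ((List.pairwise_lt_finRange _).filter _).sortedLT
    · simpa using hIJ

end Orthogonalization

section CliffordProducts

theorem sort_insert_of_forall_gt {α : Type*} [LinearOrder α] {a : α} {s : Finset α}
    (h : ∀ x ∈ s, a < x) : (insert a s).sort (· ≤ ·) = a :: s.sort (· ≤ ·) :=
  Finset.sort_insert _ (fun x hx ↦ (h x hx).le) fun ha ↦ (h a ha).false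

theorem sort_insert_of_forall_lt {α : Type*} [LinearOrder α] {a : α} {s : Finset α}
    (h : ∀ x ∈ s, x < a) : (insert a s).sort (· ≤ ·) = s.sort (· ≤ ·) ++ [a] := by
  have ha : a ∉ s := fun has ↦ (h a has).false
  refine List.Perm.eq_of_pairwise' (r := (· ≤ ·)) (Finset.pairwise_sort _ _) ?_ ?_
  · simpa [List.pairwise_append] using fun x hx ↦ (h x hx).le
  · rw [← Multiset.coe_eq_coe, ← Multiset.coe_add]
    simp [ha, ← Multiset.singleton_add, add_comm]

variable {r : ℕ} {V : Type*} [AddCommGroup V] {p q : Fin r → AddMonoid.End V}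
  {a : Fin r} {I : Finset (Fin r)}

@[simp]
theorem qProd_empty : qProd q ∅ = 1 := by simp [qProd]

@[simp]
theorem pProd_empty : pProd p ∅ = 1 := by simp [pProd]

theorem qProd_insert_of_forall_gt (h : ∀ x ∈ I, a < x) :
    qProd q (insert a I) = q a * qProd q I := by
  simp [qProd, sort_insert_of_forall_gt h]

theorem pProd_insert_of_forall_gt (h : ∀ x ∈ I, a < x) :
    pProd p (insert a I) = pProd p I * p a := by
  simp [pProd, sort_insert_of_forall_gt h]

theorem qProd_insert_of_forall_lt (h : ∀ x ∈ I, x < a) :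
    qProd q (insert a I) = qProd q I * q a := by
  simp [qProd, sort_insert_of_forall_lt h]

theorem pProd_insert_of_forall_lt (h : ∀ x ∈ I, x < a) :
    pProd p (insert a I) = p a * pProd p I := by
  simp [pProd, sort_insert_of_forall_lt h]

theorem qProd_mul_eq_zero_of_mem (hsq : ∀ i, q i * q i = 0)
    (hanti : ∀ i j, q i * q j + q j * q i = 0) (ha : a ∈ I) : qProd q I * q a = 0 := by
  induction I using Finset.induction_on_max with
  | empty => simp at ha
  | insert b T hT ih =>
    rw [qProd_insert_of_forall_lt hT, mul_assoc]
    rcases Finset.mem_insert.1 ha with rfl | haT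
    · rw [hsq, mul_zero]
    · rw [eq_neg_of_add_eq_zero_left (hanti b a), mul_neg, ← mul_assoc, ih haT, zero_mul, neg_zero]

theorem commute_pProd_mul_qProd {x : AddMonoid.End V} (hp : ∀ i ∈ I, x * p i = -(p i * x))
    (hq : ∀ i ∈ I, x * q i = -(q i * x)) : Commute x (pProd p I * qProd q I) := by
  induction I using Finset.induction_on_max with
  | empty => simp
  | insert b T hT ih =>
    obtain ⟨hpb, hpT⟩ := Finset.forall_mem_insert _ _ _ |>.1 hp
    obtain ⟨hqb, hqT⟩ := Finset.forall_mem_insert _ _ _ |>.1 hq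
    rw [pProd_insert_of_forall_lt hT, qProd_insert_of_forall_lt hT]
    set E := pProd p T * qProd q T
    have hEb : p b * pProd p T * (qProd q T * q b) = p b * E * q b := by simp only [E, mul_assoc]
    rw [hEb]
    calc x * (p b * E * q b) = x * p b * E * q b := by simp only [mul_assoc]
      _ = -(p b * (x * E) * q b) := by rw [hpb]; simp only [neg_mul, mul_assoc]
      _ = -(p b * E * (x * q b)) := by rw [(ih hpT hqT).eq]; simp only [mul_assoc]
      _ = p b * E * q b * x := by rw [hqb]; simp only [mul_neg, neg_neg, mul_assoc]

end CliffordProducts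

namespace IsCliffordRep

variable {r : ℕ} {V : Type*} [AddCommGroup V] {p q : Fin r → AddMonoid.End V}
  {a : Fin r} {T : Finset (Fin r)}

theorem commute_p_of_notMem (h : IsCliffordRep p q) (ha : a ∉ T) :
    Commute (p a) (pProd p T * qProd q T) := by
  obtain ⟨-, -, hpp, -, hpq⟩ := h
  refine commute_pProd_mul_qProd (fun i _ ↦ eq_neg_of_add_eq_zero_left (hpp a i)) fun i hi ↦ ?_
  exact eq_neg_of_add_eq_zero_left ((hpq a i).trans (if_neg (ne_of_mem_of_not_mem hi ha).symm))

theorem commute_q_of_notMem (h : IsCliffordRep p q) (ha : a ∉ T) :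
    Commute (q a) (pProd p T * qProd q T) := by
  obtain ⟨-, -, -, hqq, hpq⟩ := h
  refine commute_pProd_mul_qProd (fun i hi ↦ ?_) fun i _ ↦ eq_neg_of_add_eq_zero_left (hqq a i)
  exact eq_neg_of_add_eq_zero_right ((hpq i a).trans (if_neg (ne_of_mem_of_not_mem hi ha)))

theorem p_mul_q_add_q_mul_p_self (h : IsCliffordRep p q) (i : Fin r) :
    p i * q i + q i * p i = 1 :=
  (h.2.2.2.2 i i).trans (if_pos rfl)

theorem q_mul_p_mul_q (h : IsCliffordRep p q) (i : Fin r) : q i * p i * q i = q i := by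
  rw [eq_sub_of_add_eq' (h.p_mul_q_add_q_mul_p_self i), sub_mul, one_mul, mul_assoc, h.2.1 i,
    mul_zero, sub_zero]

theorem sum_powerset_qProd_mul_pProd (h : IsCliffordRep p q) (T : Finset (Fin r)) :
    ∑ I ∈ T.powerset, qProd q I * (pProd p T * qProd q T) * pProd p I = 1 := by
  induction T using Finset.induction_on_max with
  | empty => simp
  | insert a T hT ih =>
    have ha : a ∉ T := fun haT ↦ (hT a haT).false
    rw [Finset.sum_powerset_insert ha, ← Finset.sum_add_distrib, ← ih]
    refine Finset.sum_congr rfl fun I hI ↦ ?_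
    have hI : ∀ x ∈ I, x < a := fun x hx ↦ hT x (Finset.mem_powerset.1 hI hx)
    rw [pProd_insert_of_forall_lt hT, qProd_insert_of_forall_lt hT, pProd_insert_of_forall_lt hI,
      qProd_insert_of_forall_lt hI]
    set E := pProd p T * qProd q T
    have hEa : p a * pProd p T * (qProd q T * q a) = E * (p a * q a) := by
      rw [← mul_assoc E, ← (h.commute_p_of_notMem ha).eq]
      simp only [mul_assoc]
    have hqE : q a * E = E * q a := (h.commute_q_of_notMem ha).eq
    rw [hEa]
    calc qProd q I * (E * (p a * q a)) * pProd p I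
          + qProd q I * q a * (E * (p a * q a)) * (p a * pProd p I)
        = qProd q I * (E * (p a * q a) + q a * E * (p a * q a * p a)) * pProd p I := by
          simp only [mul_add, add_mul, mul_assoc]
      _ = qProd q I * (E * (p a * q a + q a * p a * q a * p a)) * pProd p I := by
          rw [hqE]; simp only [mul_add, mul_assoc]
      _ = qProd q I * E * pProd p I := by
          rw [h.q_mul_p_mul_q, h.p_mul_q_add_q_mul_p_self, mul_one]

theorem sum_comp_eq_id {W : Type*} [AddCommGroup W] (h : IsCliffordRep p q)
    {e : Finset (Fin r) → W →+ V} {f : Finset (Fin r) → V →+ W}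
    (he : ∀ I, e I = (qProd q I).comp (e ∅)) (hf : ∀ I, f I = (f ∅).comp (pProd p I))
    (hef : (e ∅).comp (f ∅) = (pProd p Finset.univ).comp (qProd q Finset.univ)) :
    ∑ I, (e I).comp (f I) = AddMonoidHom.id V := by
  have hterm (I : Finset (Fin r)) : (e I).comp (f I) =
      qProd q I * (pProd p Finset.univ * qProd q Finset.univ) * pProd p I := by
    ext v
    rw [he I, hf I]
    exact congrArg (qProd q I) (DFunLike.congr_fun hef (pProd p I v))
  simp only [hterm]
  exact h.sum_powerset_qProd_mul_pProd Finset.univ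

end IsCliffordRep

section KoszulSign

variable {ι : Type*} [LinearOrder ι] {i j : ι} {J : Finset ι}

/-- The sign `(-1) ^ #{j ∈ J | j < i}` picked up by moving `i` into its place in the increasing
enumeration of `insert i J`. -/
def koszulSign (i : ι) (J : Finset ι) : ℤ := ∏ j ∈ J, if j < i then -1 else 1

theorem koszulSign_mul_self (i : ι) (J : Finset ι) : koszulSign i J * koszulSign i J = 1 := by
  rw [koszulSign, ← Finset.prod_mul_distrib]
  exact Finset.prod_eq_one fun j _ ↦ by split_ifs <;> rfl

theorem koszulSign_eq_one (h : ∀ j ∈ J, i ≤ j) : koszulSign i J = 1 :=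
  Finset.prod_eq_one fun j hj ↦ if_neg (h j hj).not_gt

theorem koszulSign_insert (hj : j ∉ J) :
    koszulSign i (insert j J) = koszulSign i {j} * koszulSign i J := by
  simp only [koszulSign, Finset.prod_insert hj, Finset.prod_singleton]

theorem koszulSign_erase (hj : j ∈ J) :
    koszulSign i (J.erase j) = koszulSign i {j} * koszulSign i J := by
  conv_rhs => rw [← Finset.insert_erase hj, koszulSign_insert (J.notMem_erase j), ← mul_assoc,
    koszulSign_mul_self, one_mul]

theorem koszulSign_singleton_swap (hij : i ≠ j) : koszulSign j {i} = -koszulSign i {j} := by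
  rcases hij.lt_or_gt with h | h <;> simp [koszulSign, h, h.not_gt]

theorem koszulSign_singleton_self (i : ι) : koszulSign i {i} = 1 := by simp [koszulSign]

end KoszulSign

section FockOperators

variable {ι W V : Type*} [LinearOrder ι] [Fintype ι] [AddCommGroup W] [AddCommGroup V]

/-- The fermionic creation operator `e_J w ↦ ± e_{J ∪ {i}} w` (zero if `i ∈ J`), where `f_J`
extracts the `e_J`-component of a vector. -/
def creation (e : Finset ι → W →+ V) (f : Finset ι → V →+ W) (i : ι) : AddMonoid.End V :=
  toEnd (∑ J with i ∉ J, koszulSign i J • (e (insert i J)).comp (f J))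

/-- The fermionic annihilation operator `e_J w ↦ ± e_{J \ {i}} w` (zero if `i ∉ J`), where `f_J`
extracts the `e_J`-component of a vector. -/
def annihilation (e : Finset ι → W →+ V) (f : Finset ι → V →+ W) (i : ι) : AddMonoid.End V :=
  toEnd (∑ J with i ∈ J, koszulSign i J • (e (J.erase i)).comp (f J))

variable {e : Finset ι → W →+ V} {f : Finset ι → V →+ W}

theorem creation_apply (i : ι) (v : V) :
    creation e f i v = ∑ J with i ∉ J, koszulSign i J • e (insert i J) (f J v) := by
  change (∑ J with i ∉ J, koszulSign i J • (e (insert i J)).comp (f J) : V →+ V) v = _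
  simp only [AddMonoidHom.finsetSum_apply, AddMonoidHom.smul_apply, AddMonoidHom.comp_apply]

theorem annihilation_apply (i : ι) (v : V) :
    annihilation e f i v = ∑ J with i ∈ J, koszulSign i J • e (J.erase i) (f J v) := by
  change (∑ J with i ∈ J, koszulSign i J • (e (J.erase i)).comp (f J) : V →+ V) v = _
  simp only [AddMonoidHom.finsetSum_apply, AddMonoidHom.smul_apply, AddMonoidHom.comp_apply]

namespace IsBiorthogonal

theorem creation_apply_e (h : IsBiorthogonal e f) (i : ι) (J : Finset ι) (w : W) :
    creation e f i (e J w) = if i ∈ J then 0 else koszulSign i J • e (insert i J) w := by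
  rw [creation_apply, Finset.sum_filter, Finset.sum_eq_single J]
  · simp [h.apply_apply, ite_not]
  · intro K _ hKJ
    simp [h.apply_apply, hKJ]
  · simp

theorem annihilation_apply_e (h : IsBiorthogonal e f) (i : ι) (J : Finset ι) (w : W) :
    annihilation e f i (e J w) = if i ∈ J then koszulSign i J • e (J.erase i) w else 0 := by
  rw [annihilation_apply, Finset.sum_filter, Finset.sum_eq_single J]
  · simp [h.apply_apply]
  · intro K _ hKJ
    simp [h.apply_apply, hKJ]
  · simp

theorem f_creation_apply (h : IsBiorthogonal e f) (i : ι) (J : Finset ι) (v : V) :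
    f J (creation e f i v) = if i ∈ J then koszulSign i J • f (J.erase i) v else 0 := by
  rw [creation_apply, map_sum]
  simp only [map_zsmul, h.apply_apply]
  split_ifs with hi
  · rw [Finset.sum_eq_single (J.erase i)]
    · simp [hi, koszulSign_erase, koszulSign_singleton_self]
    · intro K hK hKJ
      have : J ≠ insert i K := by
        rintro rfl
        exact hKJ (Finset.erase_insert (Finset.mem_filter.1 hK).2).symm
      simp [this]
    · simp
  · refine Finset.sum_eq_zero fun K _ ↦ ?_
    have : J ≠ insert i K := fun hJ ↦ hi (hJ ▸ Finset.mem_insert_self i K)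
    simp [this]

theorem f_annihilation_apply (h : IsBiorthogonal e f) {i : ι} {J : Finset ι} (hi : i ∉ J) (v : V) :
    f J (annihilation e f i v) = koszulSign i J • f (insert i J) v := by
  rw [annihilation_apply, map_sum]
  simp only [map_zsmul, h.apply_apply]
  rw [Finset.sum_eq_single (insert i J)]
  · simp [hi, koszulSign_insert, koszulSign_singleton_self]
  · intro K hK hKJ
    have : J ≠ K.erase i := by
      rintro rfl
      exact hKJ (Finset.insert_erase (Finset.mem_filter.1 hK).2).symm
    simp [this]
  · simp

theorem creation_mul_self (h : IsBiorthogonal e f)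
    (hsum : ∑ J, (e J).comp (f J) = AddMonoidHom.id V) (i : ι) :
    creation e f i * creation e f i = 0 := by
  refine hom_ext_of_sum_comp_eq_id hsum fun J w ↦ ?_
  change creation e f i (creation e f i (e J w)) = 0
  by_cases hi : i ∈ J <;> simp [h.creation_apply_e, hi]

theorem annihilation_mul_self (h : IsBiorthogonal e f)
    (hsum : ∑ J, (e J).comp (f J) = AddMonoidHom.id V) (i : ι) :
    annihilation e f i * annihilation e f i = 0 := by
  refine hom_ext_of_sum_comp_eq_id hsum fun J w ↦ ?_
  change annihilation e f i (annihilation e f i (e J w)) = 0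
  by_cases hi : i ∈ J <;> simp [h.annihilation_apply_e, hi]

theorem creation_anticommute (h : IsBiorthogonal e f)
    (hsum : ∑ J, (e J).comp (f J) = AddMonoidHom.id V) (i j : ι) :
    creation e f i * creation e f j + creation e f j * creation e f i = 0 := by
  rcases eq_or_ne i j with rfl | hij
  · rw [h.creation_mul_self hsum, add_zero]
  refine hom_ext_of_sum_comp_eq_id hsum fun J w ↦ ?_
  change creation e f i (creation e f j (e J w)) + creation e f j (creation e f i (e J w)) = 0
  by_cases hi : i ∈ J <;> by_cases hj : j ∈ J <;>
    simp only [h.creation_apply_e, hi, hj, hij, hij.symm, Finset.mem_insert, map_zsmul, map_zero,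
      if_true, if_false, or_true, or_false, smul_zero, add_zero, smul_smul]
  rw [Finset.insert_comm, ← add_smul, koszulSign_insert hi, koszulSign_insert hj,
    koszulSign_singleton_swap hij]
  module

theorem annihilation_anticommute (h : IsBiorthogonal e f)
    (hsum : ∑ J, (e J).comp (f J) = AddMonoidHom.id V) (i j : ι) :
    annihilation e f i * annihilation e f j + annihilation e f j * annihilation e f i = 0 := by
  rcases eq_or_ne i j with rfl | hij
  · rw [h.annihilation_mul_self hsum, add_zero]
  refine hom_ext_of_sum_comp_eq_id hsum fun J w ↦ ?_
  change annihilation e f i (annihilation e f j (e J w)) +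
    annihilation e f j (annihilation e f i (e J w)) = 0
  by_cases hi : i ∈ J <;> by_cases hj : j ∈ J <;>
    simp only [h.annihilation_apply_e, hi, hj, hij, hij.symm, Finset.mem_erase, map_zsmul, map_zero,
      if_true, if_false, and_true, and_false, ne_eq, not_false_eq_true, smul_zero, add_zero,
      smul_smul]
  rw [Finset.erase_right_comm, ← add_smul, koszulSign_erase hi, koszulSign_erase hj,
    koszulSign_singleton_swap hij]
  module

theorem annihilation_creation_anticommutator_self (h : IsBiorthogonal e f)
    (hsum : ∑ J, (e J).comp (f J) = AddMonoidHom.id V) (i : ι) :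
    annihilation e f i * creation e f i + creation e f i * annihilation e f i = 1 := by
  refine hom_ext_of_sum_comp_eq_id hsum fun J w ↦ ?_
  change annihilation e f i (creation e f i (e J w)) +
    creation e f i (annihilation e f i (e J w)) = e J w
  by_cases hi : i ∈ J <;>
    simp [h.creation_apply_e, h.annihilation_apply_e, hi, smul_smul, koszulSign_insert,
      koszulSign_erase, koszulSign_singleton_self, koszulSign_mul_self]

theorem annihilation_creation_anticommutator_of_ne (h : IsBiorthogonal e f)
    (hsum : ∑ J, (e J).comp (f J) = AddMonoidHom.id V) {i j : ι} (hij : i ≠ j) :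
    annihilation e f i * creation e f j + creation e f j * annihilation e f i = 0 := by
  refine hom_ext_of_sum_comp_eq_id hsum fun J w ↦ ?_
  change annihilation e f i (creation e f j (e J w)) +
    creation e f j (annihilation e f i (e J w)) = 0
  by_cases hi : i ∈ J <;> by_cases hj : j ∈ J <;>
    simp only [h.creation_apply_e, h.annihilation_apply_e, hi, hj, hij, hij.symm, Finset.mem_insert,
      Finset.mem_erase, map_zsmul, map_zero, if_true, if_false, or_true, or_false, and_true,
      and_false, ne_eq, not_false_eq_true, smul_zero, add_zero, smul_smul]
  rw [Finset.erase_insert_of_ne hij.symm, ← add_smul, koszulSign_insert hj, koszulSign_erase hi,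
    koszulSign_singleton_swap hij]
  module

end IsBiorthogonal

end FockOperators

namespace IsBiorthogonal

variable {r : ℕ} {W V : Type*} [AddCommGroup W] [AddCommGroup V]
  {e : Finset (Fin r) → W →+ V} {f : Finset (Fin r) → V →+ W}

theorem isCliffordRep_annihilation_creation (h : IsBiorthogonal e f)
    (hsum : ∑ J, (e J).comp (f J) = AddMonoidHom.id V) :
    IsCliffordRep (annihilation e f) (creation e f) := by
  refine ⟨h.annihilation_mul_self hsum, h.creation_mul_self hsum, h.annihilation_anticommute hsum,
    h.creation_anticommute hsum, fun i j ↦ ?_⟩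
  split_ifs with hij
  · exact hij ▸ h.annihilation_creation_anticommutator_self hsum i
  · exact h.annihilation_creation_anticommutator_of_ne hsum hij

theorem qProd_creation_apply_e_empty (h : IsBiorthogonal e f) (I : Finset (Fin r)) (w : W) :
    qProd (creation e f) I (e ∅ w) = e I w := by
  induction I using Finset.induction_on_min with
  | empty => simp
  | insert a T hT ih =>
    rw [qProd_insert_of_forall_gt hT, AddMonoid.End.coe_mul, Function.comp_apply, ih,
      h.creation_apply_e, if_neg fun ha ↦ (hT a ha).false,
      koszulSign_eq_one fun x hx ↦ (hT x hx).le, one_smul]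

theorem pProd_annihilation_apply_e (h : IsBiorthogonal e f) (I : Finset (Fin r)) (w : W) :
    pProd (annihilation e f) I (e I w) = e ∅ w := by
  induction I using Finset.induction_on_min with
  | empty => simp
  | insert a T hT ih =>
    rw [pProd_insert_of_forall_gt hT, AddMonoid.End.coe_mul, Function.comp_apply,
      h.annihilation_apply_e, if_pos (Finset.mem_insert_self a T),
      koszulSign_eq_one (by simpa using fun x hx ↦ (hT x hx).le), one_smul,
      Finset.erase_insert fun ha ↦ (hT a ha).false, ih]

theorem f_empty_pProd_annihilation_apply (h : IsBiorthogonal e f) (I : Finset (Fin r)) (v : V) :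
    f ∅ (pProd (annihilation e f) I v) = f I v := by
  induction I using Finset.induction_on_min generalizing v with
  | empty => simp
  | insert a T hT ih =>
    rw [pProd_insert_of_forall_gt hT, AddMonoid.End.coe_mul, Function.comp_apply, ih,
      h.f_annihilation_apply fun ha ↦ (hT a ha).false,
      koszulSign_eq_one fun x hx ↦ (hT x hx).le, one_smul]

theorem qProd_univ_creation_apply_e_of_nonempty (h : IsBiorthogonal e f)
    (hsum : ∑ J, (e J).comp (f J) = AddMonoidHom.id V) {J : Finset (Fin r)} (hJ : J.Nonempty)
    (w : W) : qProd (creation e f) Finset.univ (e J w) = 0 := by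
  obtain ⟨i, hi⟩ := hJ
  have he : e J w = creation e f i (koszulSign i J • e (J.erase i) w) := by
    rw [map_zsmul, h.creation_apply_e, if_neg (J.notMem_erase i), smul_smul, koszulSign_erase hi,
      koszulSign_singleton_self, one_mul, koszulSign_mul_self, one_smul, Finset.insert_erase hi]
  have hzero := qProd_mul_eq_zero_of_mem (h.creation_mul_self hsum) (h.creation_anticommute hsum)
    (Finset.mem_univ i)
  rw [he]
  exact DFunLike.congr_fun hzero _

theorem e_empty_comp_f_empty (h : IsBiorthogonal e f)
    (hsum : ∑ J, (e J).comp (f J) = AddMonoidHom.id V) :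
    (e ∅).comp (f ∅) =
      (pProd (annihilation e f) Finset.univ).comp (qProd (creation e f) Finset.univ) := by
  refine hom_ext_of_sum_comp_eq_id hsum fun J w ↦ ?_
  change e ∅ (f ∅ (e J w)) =
    pProd (annihilation e f) Finset.univ (qProd (creation e f) Finset.univ (e J w))
  rcases J.eq_empty_or_nonempty with rfl | hJ
  · rw [h.qProd_creation_apply_e_empty, h.pProd_annihilation_apply_e, h.apply_apply, if_pos rfl]
  · rw [h.qProd_univ_creation_apply_e_of_nonempty hsum hJ, h.apply_apply, if_neg hJ.ne_empty.symm,
      map_zero, map_zero]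

end IsBiorthogonal

theorem stmt_4 {r : ℕ} (hr : 0 < r) {W V : Type} [AddCommGroup W] [AddCommGroup V]
    (π : Finset (Fin r) ≃ Fin (2 ^ r))
    (fe : Finset (Fin r) → W →+ V) (ff : Finset (Fin r) → V →+ W)
    (hso : ∀ I J : Finset (Fin r), π J ≤ π I →
      (ff I).comp (fe J) = if I = J then AddMonoidHom.id W else 0) :
    (Function.Bijective
        (fun g : Finset (Fin r) → W => ∑ I : Finset (Fin r), fe I (g I)) ↔
      fullProd π fe ff = 0) ∧
    (fullProd π fe ff = 0 ↔
      ∃ p q : Fin r → AddMonoid.End V, IsCliffordRep p q ∧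
        (∀ I : Finset (Fin r), fe I = (qProd q I).comp (fe ∅)) ∧
        (∀ I : Finset (Fin r), orthF π fe ff I = (orthF π fe ff ∅).comp (pProd p I)) ∧
        (∀ i : Fin r, (p i).comp (fe ∅) = 0) ∧
        (∀ i : Fin r, (orthF π fe ff ∅).comp (q i) = 0) ∧
        (orthF π fe ff ∅).comp (fe ∅) = AddMonoidHom.id W ∧
        (fe ∅).comp (orthF π fe ff ∅) =
          (pProd p Finset.univ).comp (qProd q Finset.univ)) := by
  have hbi : IsBiorthogonal fe (orthF π fe ff) := isBiorthogonal_orthF hso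
  rw [fullProd_eq_zero_iff]
  refine ⟨hbi.bijective_sum_iff, fun hsum ↦ ?_, ?_⟩
  · refine ⟨annihilation fe (orthF π fe ff), creation fe (orthF π fe ff),
      hbi.isCliffordRep_annihilation_creation hsum, fun I ↦ ?_, fun I ↦ ?_, fun i ↦ ?_, fun i ↦ ?_,
      hbi ∅ ∅, hbi.e_empty_comp_f_empty hsum⟩
    · exact DFunLike.ext _ _ fun w ↦ (hbi.qProd_creation_apply_e_empty I w).symm
    · exact DFunLike.ext _ _ fun v ↦ (hbi.f_empty_pProd_annihilation_apply I v).symm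
    · exact DFunLike.ext _ _ fun w ↦ hbi.annihilation_apply_e i ∅ w
    · exact DFunLike.ext _ _ fun v ↦ hbi.f_creation_apply i ∅ v
  · rintro ⟨p, q, hpq, he, hf, -, -, -, hef⟩
    exact hpq.sum_comp_eq_id he hf hef
end

section
/- There is an isomorphism of unital ℤ-algebras 𝓔(r) ≅ End_{𝔈(r)}(Λ_r)^{op}, where End_{𝔈(r)}(Λ_r) is the endomorphism ring of the left 𝔈(r)-module Λ_r, sending the generators p_i, q_i, e, f of 𝓔(r) to the endomorphisms of Λ_r induced by right multiplication by P_{0,i}, Q_{0,i}, E, and F·P_{0,[r]}·Q_{0,[r]}, respectively. -/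
/-- Generators of the infinite-dimensional Clifford algebra `𝔈(r)`. -/
inductive EGen (r : ℕ) : Type
  | P (a : ℤ) (i : Fin r)
  | Q (a : ℤ) (i : Fin r)
  | E
  | F

/-- A generator, viewed inside the free algebra. -/
noncomputable def eg {r : ℕ} (g : EGen r) : FreeAlgebra ℤ (EGen r) := FreeAlgebra.ι ℤ g

/-- The defining relations of `𝔈(r)`. -/
inductive ERel (r : ℕ) : FreeAlgebra ℤ (EGen r) → FreeAlgebra ℤ (EGen r) → Prop
  | Psq : ∀ (a : ℤ) (i : Fin r), ERel r (eg (.P a i) * eg (.P a i)) 0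
  | Qsq : ∀ (a : ℤ) (i : Fin r), ERel r (eg (.Q a i) * eg (.Q a i)) 0
  | EP : ∀ (a : ℤ) (i : Fin r),
      ERel r (eg .E * eg (.P a i)) (eg (.P (a - 1) i) * eg .E)
  | EQ : ∀ (a : ℤ) (i : Fin r),
      ERel r (eg .E * eg (.Q a i)) (eg (.Q (a - 1) i) * eg .E)
  | PP : ∀ (a b : ℤ) (i j : Fin r),
      ERel r (eg (.P a i) * eg (.P b j) + eg (.P b j) * eg (.P a i)) 0
  | QQ : ∀ (a b : ℤ) (i j : Fin r),
      ERel r (eg (.Q a i) * eg (.Q b j) + eg (.Q b j) * eg (.Q a i)) 0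
  | PQ : ∀ (a b : ℤ) (i j : Fin r),
      ERel r (eg (.P a i) * eg (.Q b j) + eg (.Q b j) * eg (.P a i))
        (if i = j ∧ a = b then 1 else 0)
  | EFone : ERel r (eg .E * eg .F) 1
  | FEone : ERel r (eg .F * eg .E) 1

/-- The infinite-dimensional Clifford algebra `𝔈(r)`, presented by generators and
relations. -/
abbrev EAlg (r : ℕ) := RingQuot (ERel r)

/-- The generator `P_{a,i}` of `𝔈(r)`. -/
noncomputable def genP {r : ℕ} (a : ℤ) (i : Fin r) : EAlg r :=
  RingQuot.mkRingHom (ERel r) (eg (.P a i))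

/-- The generator `Q_{a,i}` of `𝔈(r)`. -/
noncomputable def genQ {r : ℕ} (a : ℤ) (i : Fin r) : EAlg r :=
  RingQuot.mkRingHom (ERel r) (eg (.Q a i))

/-- The generator `E` of `𝔈(r)`. -/
noncomputable def genE {r : ℕ} : EAlg r := RingQuot.mkRingHom (ERel r) (eg .E)

/-- The generator `F` of `𝔈(r)`. -/
noncomputable def genF {r : ℕ} : EAlg r := RingQuot.mkRingHom (ERel r) (eg .F)

/-- The ordered product `P_{a,I} := P_{a,a_k} ⋯ P_{a,a_0}` for `I = {a_0 < ⋯ < a_k}`. -/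
noncomputable def genPI {r : ℕ} (a : ℤ) (I : Finset (Fin r)) : EAlg r :=
  ((I.sort (· ≤ ·)).reverse.map (genP a)).prod

/-- The ordered product `Q_{a,I} := Q_{a,a_0} ⋯ Q_{a,a_k}` for `I = {a_0 < ⋯ < a_k}`. -/
noncomputable def genQI {r : ℕ} (a : ℤ) (I : Finset (Fin r)) : EAlg r :=
  ((I.sort (· ≤ ·)).map (genQ a)).prod

/-- The left ideal `𝔍(r)` of `𝔈(r)` generated by the `P_{a,i}` with `a > 0`. -/
noncomputable def JId (r : ℕ) : Ideal (EAlg r) :=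
  Ideal.span {x | ∃ (a : ℤ) (i : Fin r), 0 < a ∧ x = genP a i}

/-- The quotient left `𝔈(r)`-module `Λ_r := 𝔈(r)/𝔍(r)`. -/
abbrev LambdaMod (r : ℕ) := EAlg r ⧸ JId r

/-- Generators of the finite extended Clifford algebra `𝓔(r)`. -/
inductive SGen (r : ℕ) : Type
  | p (i : Fin r)
  | q (i : Fin r)
  | e
  | f

/-- A generator, viewed inside the free algebra. -/
noncomputable def sg {r : ℕ} (g : SGen r) : FreeAlgebra ℤ (SGen r) := FreeAlgebra.ι ℤ g

/-- `p_{[r]} = p_{r-1} ⋯ p_0` inside the free algebra. -/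
noncomputable def sgPtop (r : ℕ) : FreeAlgebra ℤ (SGen r) :=
  ((List.finRange r).reverse.map (fun i => sg (.p i))).prod

/-- `q_{[r]} = q_0 ⋯ q_{r-1}` inside the free algebra. -/
noncomputable def sgQtop (r : ℕ) : FreeAlgebra ℤ (SGen r) :=
  ((List.finRange r).map (fun i => sg (.q i))).prod

/-- The defining relations of `𝓔(r)`. -/
inductive SRel (r : ℕ) : FreeAlgebra ℤ (SGen r) → FreeAlgebra ℤ (SGen r) → Prop
  | psq : ∀ i : Fin r, SRel r (sg (.p i) * sg (.p i)) 0
  | qsq : ∀ i : Fin r, SRel r (sg (.q i) * sg (.q i)) 0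
  | pp : ∀ i j : Fin r, SRel r (sg (.p i) * sg (.p j) + sg (.p j) * sg (.p i)) 0
  | qq : ∀ i j : Fin r, SRel r (sg (.q i) * sg (.q j) + sg (.q j) * sg (.q i)) 0
  | pq : ∀ i j : Fin r,
      SRel r (sg (.p i) * sg (.q j) + sg (.q j) * sg (.p i)) (if i = j then 1 else 0)
  | pe : ∀ i : Fin r, SRel r (sg (.p i) * sg .e) 0
  | fq : ∀ i : Fin r, SRel r (sg .f * sg (.q i)) 0
  | fe : SRel r (sg .f * sg .e) 1
  | ef : SRel r (sg .e * sg .f) (sgPtop r * sgQtop r)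

/-- The extended Clifford algebra `𝓔(r)`, presented by generators and relations. -/
abbrev SAlg (r : ℕ) := RingQuot (SRel r)

/-- The generator `p_i` of `𝓔(r)`. -/
noncomputable def sgenp {r : ℕ} (i : Fin r) : SAlg r :=
  RingQuot.mkRingHom (SRel r) (sg (.p i))

/-- The generator `q_i` of `𝓔(r)`. -/
noncomputable def sgenq {r : ℕ} (i : Fin r) : SAlg r :=
  RingQuot.mkRingHom (SRel r) (sg (.q i))

/-- The generator `e` of `𝓔(r)`. -/
noncomputable def sgene {r : ℕ} : SAlg r := RingQuot.mkRingHom (SRel r) (sg .e)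

/-- The generator `f` of `𝓔(r)`. -/
noncomputable def sgenf {r : ℕ} : SAlg r := RingQuot.mkRingHom (SRel r) (sg .f)

/-!
Right multiplication by an element of the idealizer of `𝔍(r)` is an endomorphism of `Λ_r`, and the
proposed images satisfy the relations of `𝓔(r)` modulo `𝔍(r)`; this gives `𝓔(r) → End(Λ_r)ᵒᵖ`.
An endomorphism is determined by the image of the vacuum `1 ∈ Λ_r`, which can be any vector killed
by all `P_{a,i}` with `a > 0`.

*Surjectivity.* Let `R ⊆ Λ_r` be the set of images of the vacuum under `𝓔(r)`. It is stable under
`E` and under `P_{a,i}`, `Q_{a,i}` for `a ≤ 0`, so every vector `v` of `Λ_r` is carried into `R` by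
some `E ^ n`. If `v` is killed by the `P_{a,i}` with `a > 0` and `n > 0`, then `E ^ n v` is killed
by the `P_{0,i}`, hence fixed by `P_{0,[r]} Q_{0,[r]}`, which acts on `R` as `e f`; so
`E ^ n v ∈ E R`, and `n` can be lowered to `0`.

*Injectivity.* In `𝓔(r)` there is an operation `σ` with `σ x * e = e * x` whose values anticommute
with all `p_i` and `q_i`. Letting `P_{a,i}` and `Q_{a,i}` act on sequences `u : ℤ → 𝓔(r)`, modulo
equality near `+∞`, by `(P_{a,i} u) k = σ^(k - a) (p_i) * u k` and similarly for `Q_{a,i}`, and `E`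
by the shift, gives a representation of `𝔈(r)` in which `𝔍(r)` kills the sequence `e ^ k`. Since
`f ^ k * e ^ k = 1`, the vector `e ^ k * s` attached to `s` determines `s`.
-/

/-! ### Clifford relations -/

/-- The relations of a Clifford algebra of split type: the `p i` are annihilation and the `q i`
creation operators. The families need not generate the ring `A`. -/
structure IsClifford {ι A : Type*} [DecidableEq ι] [Ring A] (p q : ι → A) : Prop where
  p_mul_self : ∀ i, p i * p i = 0
  q_mul_self : ∀ i, q i * q i = 0
  p_anticomm : ∀ i j, p i * p j + p j * p i = 0
  q_anticomm : ∀ i j, q i * q j + q j * q i = 0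
  p_q : ∀ i j, p i * q j + q j * p i = if i = j then 1 else 0

section Products

variable {ι A : Type*} [Ring A]

theorem mul_prod_eq_zero_of_mem {x : ι → A} (hsq : ∀ i, x i * x i = 0)
    (hx : ∀ i j, x i * x j + x j * x i = 0) {i : ι} {l : List ι} (hi : i ∈ l) :
    x i * (l.map x).prod = 0 := by
  induction l with
  | nil => simp at hi
  | cons a l ih =>
    rw [List.map_cons, List.prod_cons]
    rcases List.mem_cons.1 hi with rfl | hi
    · rw [← mul_assoc, hsq, zero_mul]
    · linear_combination (norm := noncomm_ring) hx i a * (l.map x).prod - x a * ih hi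

theorem prod_mul_eq_zero_of_mem {x : ι → A} (hsq : ∀ i, x i * x i = 0)
    (hx : ∀ i j, x i * x j + x j * x i = 0) {i : ι} {l : List ι} (hi : i ∈ l) :
    (l.map x).prod * x i = 0 := by
  have h := mul_prod_eq_zero_of_mem (x := fun j => MulOpposite.op (x j))
    (fun j => congrArg MulOpposite.op (hsq j))
    (fun j k => congrArg MulOpposite.op (hx k j)) (List.mem_reverse.2 hi)
  apply MulOpposite.op_injective
  simpa [MulOpposite.op_list_prod, Function.comp_def] using h

/-- The product `p_{a₁} ⋯ p_{aₙ} q_{aₙ} ⋯ q_{a₁}` for `l = [a₁, …, aₙ]`, which under the Clifford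
relations is the projection onto the vectors annihilated by `p_{a₁}, …, p_{aₙ}`. The list carries
the order of the `p`-factors, so `p_{[r]} q_{[r]}` is the case `l = (List.finRange r).reverse`. -/
def vacuumProj (p q : ι → A) (l : List ι) : A :=
  (l.map p).prod * (l.reverse.map q).prod

variable {p q : ι → A}

theorem vacuumProj_nil : vacuumProj p q [] = 1 := by
  simp [vacuumProj]

theorem vacuumProj_cons (a : ι) (l : List ι) :
    vacuumProj p q (a :: l) = p a * vacuumProj p q l * q a := by
  simp [vacuumProj, mul_assoc]

theorem commute_vacuumProj {x : A} {l : List ι} (hp : ∀ i ∈ l, x * p i + p i * x = 0)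
    (hq : ∀ i ∈ l, x * q i + q i * x = 0) : Commute x (vacuumProj p q l) := by
  induction l with
  | nil => simp [vacuumProj_nil]
  | cons a l ih =>
    have comm : x * vacuumProj p q l = vacuumProj p q l * x :=
      ih (fun i hi => hp i (List.mem_cons_of_mem a hi)) fun i hi => hq i (List.mem_cons_of_mem a hi)
    rw [commute_iff_eq, vacuumProj_cons]
    linear_combination (norm := noncomm_ring)
      hp a List.mem_cons_self * vacuumProj p q l * q a - p a * comm * q a -
        p a * vacuumProj p q l * hq a List.mem_cons_self

theorem semiconjBy_vacuumProj {x : A} {p' q' : ι → A} (hp : ∀ i, SemiconjBy x (p i) (p' i))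
    (hq : ∀ i, SemiconjBy x (q i) (q' i)) (l : List ι) :
    SemiconjBy x (vacuumProj p q l) (vacuumProj p' q' l) := by
  induction l with
  | nil => simp [vacuumProj_nil]
  | cons a l ih => simpa only [vacuumProj_cons] using ((hp a).mul_right ih).mul_right (hq a)

end Products

namespace IsClifford

variable {ι A : Type*} [DecidableEq ι] [Ring A] {p q : ι → A} (H : IsClifford p q)
include H

theorem p_q_of_ne {i j : ι} (h : i ≠ j) : p i * q j + q j * p i = 0 := by
  rw [H.p_q, if_neg h]

theorem p_q_self (i : ι) : p i * q i + q i * p i = 1 := by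
  rw [H.p_q, if_pos rfl]

theorem p_mul_vacuumProj {i : ι} {l : List ι} (hi : i ∈ l) : p i * vacuumProj p q l = 0 := by
  rw [vacuumProj, ← mul_assoc, mul_prod_eq_zero_of_mem H.p_mul_self H.p_anticomm hi, zero_mul]

theorem vacuumProj_mul_q {i : ι} {l : List ι} (hi : i ∈ l) : vacuumProj p q l * q i = 0 := by
  rw [vacuumProj, mul_assoc,
    prod_mul_eq_zero_of_mem H.q_mul_self H.q_anticomm (List.mem_reverse.2 hi), mul_zero]

theorem commute_p_vacuumProj {i : ι} {l : List ι} (hi : i ∉ l) :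
    Commute (p i) (vacuumProj p q l) :=
  commute_vacuumProj (fun _ _ => H.p_anticomm i _)
    fun _ hj => H.p_q_of_ne (ne_of_mem_of_not_mem hj hi).symm

theorem commute_q_vacuumProj {i : ι} {l : List ι} (hi : i ∉ l) :
    Commute (q i) (vacuumProj p q l) :=
  commute_vacuumProj (fun _ hj => (add_comm _ _).trans (H.p_q_of_ne (ne_of_mem_of_not_mem hj hi)))
    fun _ _ => H.q_anticomm i _

theorem vacuumProj_cons_of_notMem {a : ι} {l : List ι} (ha : a ∉ l) :
    vacuumProj p q (a :: l) = vacuumProj p q l * (p a * q a) := by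
  rw [vacuumProj_cons, (H.commute_p_vacuumProj ha).eq, mul_assoc]

theorem vacuumProj_smul_of_p_smul_eq_zero {M : Type*} [AddCommGroup M] [Module A M] {v : M}
    (hv : ∀ i, p i • v = 0) {l : List ι} (hl : l.Nodup) : vacuumProj p q l • v = v := by
  induction l with
  | nil => rw [vacuumProj_nil, one_smul]
  | cons a l ih =>
    obtain ⟨ha, hl⟩ := List.nodup_cons.1 hl
    have hpq : (p a * q a) • v = v := by
      rw [eq_sub_of_add_eq (H.p_q_self a), sub_smul, one_smul, mul_smul, hv, smul_zero, sub_zero]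
    rw [H.vacuumProj_cons_of_notMem ha, mul_smul, hpq, ih hl]

theorem p_mul_q_mul_p (i : ι) : p i * q i * p i = p i := by
  linear_combination (norm := noncomm_ring) H.p_q_self i * p i - q i * H.p_mul_self i

theorem mem_of_vacuumProj_mul_mem {K : AddSubgroup A} (hK : ∀ i, ∀ s ∈ K, q i * s ∈ K)
    {l : List ι} (hl : l.Nodup) (h : ∀ s, vacuumProj p q l * s ∈ K) (s : A) : s ∈ K := by
  induction l generalizing s with
  | nil => simpa [vacuumProj_nil] using h s
  | cons a l ih =>
    obtain ⟨ha, hl⟩ := List.nodup_cons.1 hl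
    have mem_pq (t : A) : vacuumProj p q l * (p a * q a * t) ∈ K := by
      rw [← mul_assoc, ← H.vacuumProj_cons_of_notMem ha]
      exact h t
    have mem_p (t : A) : vacuumProj p q l * (p a * t) ∈ K := by
      rw [← H.p_mul_q_mul_p a, mul_assoc (p a * q a)]
      exact mem_pq (p a * t)
    refine ih hl (fun t => ?_) s
    have split : vacuumProj p q l * t =
        vacuumProj p q l * (p a * q a * t) + q a * (vacuumProj p q l * (p a * t)) := by
      linear_combination (norm := noncomm_ring) -(vacuumProj p q l * H.p_q_self a * t) -
        (H.commute_q_vacuumProj ha).eq * p a * t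
    rw [split]
    exact K.add_mem (mem_pq t) (hK a _ (mem_p t))

end IsClifford

section SignTwist

variable {ι A : Type*} [Ring A]

/-- The composite over `i ∈ l` of the maps `z ↦ z - q i * z * p i`. If `y` is killed by all `p i` on
the left and by all `q i` on the right, this extends `y` from the vacuum to an element that
anticommutes with every `p i` and `q i`. -/
def signTwist (p q : ι → A) (l : List ι) (y : A) : A :=
  l.foldr (fun i z => z - q i * z * p i) y

theorem signTwist_cons (p q : ι → A) (a : ι) (l : List ι) (y : A) :
    signTwist p q (a :: l) y = signTwist p q l y - q a * signTwist p q l y * p a :=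
  rfl

theorem signTwist_mul {p q : ι → A} {e : A} (pe : ∀ i, p i * e = 0) (l : List ι) (y : A) :
    signTwist p q l y * e = y * e := by
  induction l with
  | nil => rfl
  | cons a l ih => rw [signTwist_cons, sub_mul, mul_assoc _ (p a), pe, mul_zero, sub_zero, ih]

end SignTwist

namespace IsClifford

variable {ι A : Type*} [DecidableEq ι] [Ring A] {p q : ι → A} (H : IsClifford p q)
include H

theorem p_mul_signTwist_of_notMem {j : ι} {y : A} (hy : p j * y = 0) {l : List ι} (hj : j ∉ l) :
    p j * signTwist p q l y = 0 := by
  induction l with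
  | nil => exact hy
  | cons a l ih =>
    obtain ⟨hja, hj⟩ := List.ne_and_not_mem_of_not_mem_cons hj
    rw [signTwist_cons]
    linear_combination (norm := noncomm_ring) ih hj + q a * ih hj * p a -
      H.p_q_of_ne hja * signTwist p q l y * p a

theorem signTwist_mul_q_of_notMem {j : ι} {y : A} (hy : y * q j = 0) {l : List ι} (hj : j ∉ l) :
    signTwist p q l y * q j = 0 := by
  induction l with
  | nil => exact hy
  | cons a l ih =>
    obtain ⟨hja, hj⟩ := List.ne_and_not_mem_of_not_mem_cons hj
    rw [signTwist_cons]
    linear_combination (norm := noncomm_ring) ih hj + q a * ih hj * p a -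
      q a * signTwist p q l y * H.p_q_of_ne (Ne.symm hja)

theorem p_anticomm_signTwist {j : ι} {y : A} (hy : p j * y = 0) {l : List ι} (hl : l.Nodup)
    (hj : j ∈ l) : p j * signTwist p q l y + signTwist p q l y * p j = 0 := by
  induction l with
  | nil => simp at hj
  | cons a l ih =>
    obtain ⟨ha, hl⟩ := List.nodup_cons.1 hl
    rw [signTwist_cons]
    rcases eq_or_ne j a with rfl | hja
    · have kill := H.p_mul_signTwist_of_notMem hy ha
      linear_combination (norm := noncomm_ring) kill + q j * kill * p j -
        H.p_q_self j * signTwist p q l y * p j - q j * signTwist p q l y * H.p_mul_self j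
    · have anticomm := ih hl (List.mem_of_ne_of_mem hja hj)
      linear_combination (norm := noncomm_ring) anticomm + q a * anticomm * p a -
        H.p_q_of_ne hja * signTwist p q l y * p a - q a * signTwist p q l y * H.p_anticomm j a

theorem q_anticomm_signTwist {j : ι} {y : A} (hy : y * q j = 0) {l : List ι} (hl : l.Nodup)
    (hj : j ∈ l) : q j * signTwist p q l y + signTwist p q l y * q j = 0 := by
  induction l with
  | nil => simp at hj
  | cons a l ih =>
    obtain ⟨ha, hl⟩ := List.nodup_cons.1 hl
    rw [signTwist_cons]
    rcases eq_or_ne j a with rfl | hja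
    · have kill := H.signTwist_mul_q_of_notMem hy ha
      linear_combination (norm := noncomm_ring) kill + q j * kill * p j -
        q j * signTwist p q l y * H.p_q_self j - H.q_mul_self j * signTwist p q l y * p j
    · have anticomm := ih hl (List.mem_of_ne_of_mem hja hj)
      linear_combination (norm := noncomm_ring) anticomm + q a * anticomm * p a -
        q a * signTwist p q l y * H.p_q_of_ne (Ne.symm hja) -
          H.q_anticomm j a * signTwist p q l y * p a

end IsClifford

/-- The defining relations of `𝓔(r)`, for elements of an arbitrary ring. -/
structure IsExtClifford {A : Type*} [Ring A] {r : ℕ} (p q : Fin r → A) (e f : A) : Prop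
    extends IsClifford p q where
  p_mul_e : ∀ i, p i * e = 0
  f_mul_q : ∀ i, f * q i = 0
  f_mul_e : f * e = 1
  e_mul_f : e * f = vacuumProj p q (List.finRange r).reverse

/-- The element intertwined with `x` by `e`, in the sense that `cliffordShift x * e = e * x`, and
anticommuting with all `p i` and `q i`. Iterating it realises the operators `P_{a,i}` and `Q_{a,i}`
with `a < 0` inside `𝓔(r)`. -/
def cliffordShift {A : Type*} [Ring A] {r : ℕ} (p q : Fin r → A) (e f x : A) : A :=
  signTwist p q (List.finRange r) (e * x * f)

namespace IsExtClifford

variable {A : Type*} [Ring A] {r : ℕ} {p q : Fin r → A} {e f : A} (H : IsExtClifford p q e f)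
include H

theorem mem_of_e_mul_mem {K : AddSubgroup A} (hq : ∀ i, ∀ s ∈ K, q i * s ∈ K)
    (he : ∀ s, e * s ∈ K) (s : A) : s ∈ K := by
  refine H.mem_of_vacuumProj_mul_mem hq (List.nodup_reverse.2 (List.nodup_finRange r)) ?_ s
  intro t
  rw [← H.e_mul_f, mul_assoc]
  exact he (f * t)

theorem eq_of_mul_e_eq {y z : A} (hy : ∀ i, Commute (q i) y) (hz : ∀ i, Commute (q i) z)
    (h : y * e = z * e) : y = z := by
  let K : AddSubgroup A := (AddMonoidHom.mulLeft y).eqLocus (AddMonoidHom.mulLeft z)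
  suffices (1 : A) ∈ K by
    simpa only [mul_one] using (show y * 1 = z * 1 from this)
  refine H.mem_of_e_mul_mem (fun i s (hs : y * s = z * s) => ?_) (fun s => ?_) 1
  · change y * (q i * s) = z * (q i * s)
    rw [← (hy i).left_comm, ← (hz i).left_comm, hs]
  · change y * (e * s) = z * (e * s)
    rw [← mul_assoc, h, mul_assoc]

local notation "σ" => cliffordShift p q e f

theorem cliffordShift_mul_e (x : A) : σ x * e = e * x := by
  rw [cliffordShift, signTwist_mul H.p_mul_e, mul_assoc, H.f_mul_e, mul_one]

theorem p_anticomm_cliffordShift (i : Fin r) (x : A) : p i * σ x + σ x * p i = 0 :=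
  H.p_anticomm_signTwist (by rw [← mul_assoc, ← mul_assoc, H.p_mul_e, zero_mul, zero_mul])
    (List.nodup_finRange r) (List.mem_finRange i)

theorem q_anticomm_cliffordShift (i : Fin r) (x : A) : q i * σ x + σ x * q i = 0 :=
  H.q_anticomm_signTwist (by rw [mul_assoc, H.f_mul_q, mul_zero])
    (List.nodup_finRange r) (List.mem_finRange i)

theorem commute_q_cliffordShift_mul (i : Fin r) (x y : A) : Commute (q i) (σ x * σ y) := by
  rw [commute_iff_eq]
  linear_combination (norm := noncomm_ring)
    H.q_anticomm_cliffordShift i x * σ y - σ x * H.q_anticomm_cliffordShift i y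

theorem cliffordShift_mul_cliffordShift_mul_e (x y : A) : σ x * σ y * e = e * (x * y) := by
  rw [mul_assoc, H.cliffordShift_mul_e, ← mul_assoc, H.cliffordShift_mul_e, mul_assoc]

theorem cliffordShift_mul_self {x : A} (h : x * x = 0) : σ x * σ x = 0 := by
  refine H.eq_of_mul_e_eq (fun i => H.commute_q_cliffordShift_mul i x x)
    (fun i => Commute.zero_right _) ?_
  rw [H.cliffordShift_mul_cliffordShift_mul_e, h, mul_zero, zero_mul]

theorem cliffordShift_anticomm {x y : A} {c : ℤ} (h : x * y + y * x = c) :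
    σ x * σ y + σ y * σ x = c := by
  refine H.eq_of_mul_e_eq (fun i => (H.commute_q_cliffordShift_mul i x y).add_right
    (H.commute_q_cliffordShift_mul i y x)) (fun i => Int.commute_cast _ _) ?_
  rw [add_mul, H.cliffordShift_mul_cliffordShift_mul_e, H.cliffordShift_mul_cliffordShift_mul_e,
    ← mul_add, h, (Int.cast_commute c e).eq]

theorem iterate_cliffordShift_mul_self {x : A} (h : x * x = 0) (n : ℕ) :
    σ^[n] x * σ^[n] x = 0 := by
  induction n with
  | zero => exact h
  | succ n ih =>
    rw [Function.iterate_succ_apply']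
    exact H.cliffordShift_mul_self ih

theorem iterate_cliffordShift_anticomm {x y : A} {c : ℤ} (h : x * y + y * x = c)
    (hx : ∀ z, x * σ z + σ z * x = 0) (hy : ∀ z, y * σ z + σ z * y = 0) (n m : ℕ) :
    σ^[n] x * σ^[m] y + σ^[m] y * σ^[n] x = ((if n = m then c else 0 : ℤ) : A) := by
  induction n generalizing m with
  | zero =>
    cases m with
    | zero => simpa using h
    | succ m => simpa [Function.iterate_succ_apply'] using hx (σ^[m] y)
  | succ n ih =>
    cases m with
    | zero => simpa [Function.iterate_succ_apply', add_comm] using hy (σ^[n] x)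
    | succ m =>
      simpa [Function.iterate_succ_apply'] using H.cliffordShift_anticomm (ih m)

theorem iterate_cliffordShift_mul_e_pow (x : A) (n : ℕ) : σ^[n] x * e ^ n = e ^ n * x := by
  induction n with
  | zero => simp
  | succ n ih =>
    rw [Function.iterate_succ_apply', pow_succ', ← mul_assoc, H.cliffordShift_mul_e, mul_assoc, ih,
      mul_assoc]

end IsExtClifford

/-! ### Idealizers and endomorphisms of cyclic modules -/

section Idealizer

variable {A : Type*} [Ring A]

/-- The idealizer of a left ideal `J`, i.e. the largest subring of `A` in which `J` is a two-sided
ideal. -/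
def idealizer (J : Ideal A) : Subring A where
  carrier := {y | ∀ x ∈ J, x * y ∈ J}
  zero_mem' x _ := by simp
  one_mem' x hx := by simpa using hx
  add_mem' hy hz x hx := by simpa only [mul_add] using J.add_mem (hy x hx) (hz x hx)
  neg_mem' hy x hx := by simpa only [mul_neg] using J.neg_mem (hy x hx)
  mul_mem' hy hz x hx := by simpa only [mul_assoc] using hz _ (hy x hx)

theorem mem_idealizer_span {s : Set A} {y : A} :
    y ∈ idealizer (Ideal.span s) ↔ ∀ x ∈ s, x * y ∈ Ideal.span s :=
  Submodule.span_le (p := Submodule.comap (LinearMap.toSpanSingleton A A y) (Ideal.span s))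

theorem end_quotient_ext {J : Ideal A} {φ ψ : Module.End A (A ⧸ J)}
    (h : φ (Submodule.Quotient.mk 1) = ψ (Submodule.Quotient.mk 1)) : φ = ψ :=
  Submodule.linearMap_qext J (LinearMap.ext_ring h)

/-- The action of the idealizer of `J` on `A ⧸ J` by right multiplication. -/
def rightMulEnd (J : Ideal A) : idealizer J →+* (Module.End A (A ⧸ J))ᵐᵒᵖ where
  toFun y := .op (J.mapQ J (LinearMap.toSpanSingleton A A y) y.2)
  map_one' := MulOpposite.unop_injective <| end_quotient_ext <|
    congrArg Submodule.Quotient.mk (mul_one (1 : A))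
  map_zero' := MulOpposite.unop_injective <| end_quotient_ext <|
    congrArg Submodule.Quotient.mk (mul_zero (1 : A))
  map_add' y z := MulOpposite.unop_injective <| end_quotient_ext <|
    congrArg Submodule.Quotient.mk (mul_add (1 : A) y z)
  map_mul' y z := MulOpposite.unop_injective <| end_quotient_ext <|
    congrArg Submodule.Quotient.mk (mul_assoc (1 : A) y z).symm

variable {J : Ideal A}

theorem rightMulEnd_unop_mk (y : idealizer J) (x : A) :
    (rightMulEnd J y).unop (Submodule.Quotient.mk x) = Submodule.Quotient.mk (x * y) :=
  rfl

theorem rightMulEnd_eq_iff {y z : idealizer J} :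
    rightMulEnd J y = rightMulEnd J z ↔ (y - z : A) ∈ J := by
  rw [← Submodule.Quotient.eq]
  refine ⟨fun h => ?_, fun h => MulOpposite.unop_injective (end_quotient_ext ?_)⟩
  · simpa only [rightMulEnd_unop_mk, one_mul] using
      congrArg (fun φ => φ.unop (Submodule.Quotient.mk 1)) h
  · simpa only [rightMulEnd_unop_mk, one_mul] using h

end Idealizer

namespace EAlg

variable {r : ℕ}

theorem genP_anticomm (a b : ℤ) (i j : Fin r) :
    genP a i * genP b j + genP b j * genP a i = 0 := by
  simpa [genP] using RingQuot.mkRingHom_rel (ERel.PP a b i j)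

theorem genQ_anticomm (a b : ℤ) (i j : Fin r) :
    genQ a i * genQ b j + genQ b j * genQ a i = 0 := by
  simpa [genQ] using RingQuot.mkRingHom_rel (ERel.QQ a b i j)

theorem genP_genQ (a b : ℤ) (i j : Fin r) :
    genP a i * genQ b j + genQ b j * genP a i = if i = j ∧ a = b then 1 else 0 := by
  simpa [genP, genQ, apply_ite] using RingQuot.mkRingHom_rel (ERel.PQ a b i j)

theorem genP_genQ_of_ne {a b : ℤ} (h : a ≠ b) (i j : Fin r) :
    genP a i * genQ b j + genQ b j * genP a i = 0 := by
  rw [genP_genQ, if_neg fun hij => h hij.2]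

theorem isClifford (a : ℤ) : IsClifford (genP (r := r) a) (genQ a) where
  p_mul_self i := by simpa [genP] using RingQuot.mkRingHom_rel (ERel.Psq a i)
  q_mul_self i := by simpa [genQ] using RingQuot.mkRingHom_rel (ERel.Qsq a i)
  p_anticomm := genP_anticomm a a
  q_anticomm := genQ_anticomm a a
  p_q i j := by simpa using genP_genQ a a i j

theorem genE_mul_genF : (genE : EAlg r) * genF = 1 := by
  simpa [genE, genF] using RingQuot.mkRingHom_rel (ERel.EFone (r := r))

theorem genF_mul_genE : (genF : EAlg r) * genE = 1 := by
  simpa [genE, genF] using RingQuot.mkRingHom_rel (ERel.FEone (r := r))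

theorem semiconjBy_genE_genP (a : ℤ) (i : Fin r) :
    SemiconjBy genE (genP a i) (genP (a - 1) i) := by
  simpa [SemiconjBy, genE, genP] using RingQuot.mkRingHom_rel (ERel.EP a i)

theorem semiconjBy_genE_genQ (a : ℤ) (i : Fin r) :
    SemiconjBy genE (genQ a i) (genQ (a - 1) i) := by
  simpa [SemiconjBy, genE, genQ] using RingQuot.mkRingHom_rel (ERel.EQ a i)

theorem semiconjBy_genE_pow {X : ℤ → EAlg r} (hX : ∀ a, SemiconjBy genE (X a) (X (a - 1)))
    (n : ℕ) (a : ℤ) : SemiconjBy (genE ^ n) (X a) (X (a - n)) := by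
  induction n generalizing a with
  | zero => simp
  | succ n ih =>
    rw [pow_succ, Nat.cast_succ, add_comm, ← sub_sub]
    exact (ih (a - 1)).mul_left (hX a)

theorem genP_mul_genF (a : ℤ) (i : Fin r) : genP a i * genF = genF * genP (a - 1) i := by
  linear_combination (norm := noncomm_ring)
    genF * (semiconjBy_genE_genP a i).eq * genF + genF * genP (a - 1) i * genE_mul_genF
      - genF_mul_genE * genP a i * genF

theorem induction {C : EAlg r → Prop} (intCast : ∀ n : ℤ, C n)
    (gen : ∀ g : EGen r, C (RingQuot.mkRingHom (ERel r) (eg g)))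
    (add : ∀ x y, C x → C y → C (x + y)) (mul : ∀ x y, C x → C y → C (x * y)) (x : EAlg r) :
    C x := by
  obtain ⟨x, rfl⟩ := RingQuot.mkRingHom_surjective _ x
  induction x using FreeAlgebra.induction with
  | grade0 n => simpa using intCast n
  | grade1 g => exact gen g
  | mul x y hx hy => simpa only [map_mul] using mul _ _ hx hy
  | add x y hx hy => simpa only [map_add] using add _ _ hx hy

/-- The element `P_{a,[r]} Q_{a,[r]}` of `𝔈(r)`. -/
noncomputable abbrev topProj (r : ℕ) (a : ℤ) : EAlg r :=
  vacuumProj (genP a) (genQ a) (List.finRange r).reverse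

theorem genPI_univ_mul_genQI_univ (a : ℤ) :
    genPI a Finset.univ * genQI a Finset.univ = topProj r a := by
  rw [genPI, genQI, Fin.sort_univ, topProj, vacuumProj, List.reverse_reverse]

theorem genE_mul_topProj_one : genE * topProj r 1 = topProj r 0 * genE :=
  semiconjBy_vacuumProj (semiconjBy_genE_genP 1) (semiconjBy_genE_genQ 1) _

theorem genP_mem_JId {a : ℤ} (ha : 0 < a) (i : Fin r) : genP a i ∈ JId r :=
  Ideal.subset_span ⟨a, i, ha, rfl⟩

theorem mem_idealizer_JId {y : EAlg r} :
    y ∈ idealizer (JId r) ↔ ∀ a i, 0 < a → genP a i * y ∈ JId r :=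
  mem_idealizer_span.trans
    ⟨fun h a i ha => h _ ⟨a, i, ha, rfl⟩, by rintro h _ ⟨a, i, ha, rfl⟩; exact h a i ha⟩

theorem genP_smul_mk_one {a : ℤ} (ha : 0 < a) (i : Fin r) :
    (genP a i : EAlg r) • (Submodule.Quotient.mk 1 : LambdaMod r) = 0 := by
  rw [← Submodule.Quotient.mk_smul, smul_eq_mul, mul_one, Submodule.Quotient.mk_eq_zero]
  exact genP_mem_JId ha i

theorem mul_mem_JId_of_anticomm {x y : EAlg r} (h : x * y + y * x = 0) (hx : x ∈ JId r) :
    x * y ∈ JId r := by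
  rw [eq_neg_of_add_eq_zero_left h]
  exact neg_mem ((JId r).mul_mem_left y hx)

theorem genP_zero_mem_idealizer (i : Fin r) : genP 0 i ∈ idealizer (JId r) :=
  mem_idealizer_JId.2 fun a j ha =>
    mul_mem_JId_of_anticomm (genP_anticomm a 0 j i) (genP_mem_JId ha j)

theorem genQ_zero_mem_idealizer (i : Fin r) : genQ 0 i ∈ idealizer (JId r) :=
  mem_idealizer_JId.2 fun _ j ha =>
    mul_mem_JId_of_anticomm (genP_genQ_of_ne ha.ne' j i) (genP_mem_JId ha j)

theorem genE_mem_idealizer : genE ∈ idealizer (JId r) :=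
  mem_idealizer_JId.2 fun a i ha => by
    have hE := (semiconjBy_genE_genP (a + 1) i).eq
    rw [add_sub_cancel_right] at hE
    rw [← hE]
    exact (JId r).mul_mem_left genE (genP_mem_JId (by lia) i)

theorem genF_mul_topProj_mem_idealizer : genF * topProj r 0 ∈ idealizer (JId r) :=
  mem_idealizer_JId.2 fun a i ha => by
    rw [← mul_assoc, genP_mul_genF, mul_assoc]
    refine (JId r).mul_mem_left genF ?_
    rcases (show 1 ≤ a from ha).eq_or_lt with rfl | ha
    · rw [sub_self, (isClifford 0).p_mul_vacuumProj (by simp)]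
      exact zero_mem _
    · have comm : Commute (genP (a - 1) i) (topProj r 0) :=
        commute_vacuumProj (fun j _ => genP_anticomm _ _ _ _)
          fun j _ => genP_genQ_of_ne (by lia) _ _
      rw [comm.eq]
      exact (JId r).mul_mem_left _ (genP_mem_JId (by lia) i)

theorem topProj_one_sub_one_mem_JId : topProj r 1 - 1 ∈ JId r := by
  rw [← Submodule.Quotient.eq]
  simpa only [← Submodule.Quotient.mk_smul, smul_eq_mul, mul_one] using
    (isClifford 1).vacuumProj_smul_of_p_smul_eq_zero (genP_smul_mk_one (r := r) one_pos)
      (List.nodup_reverse.2 (List.nodup_finRange r))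

end EAlg

/-! ### The homomorphism `𝓔(r) → End(Λ_r)ᵒᵖ` -/

namespace SAlg

variable {r : ℕ}

theorem isExtClifford : IsExtClifford (sgenp (r := r)) sgenq sgene sgenf where
  p_mul_self i := by simpa [sgenp] using RingQuot.mkRingHom_rel (SRel.psq i)
  q_mul_self i := by simpa [sgenq] using RingQuot.mkRingHom_rel (SRel.qsq i)
  p_anticomm i j := by simpa [sgenp] using RingQuot.mkRingHom_rel (SRel.pp i j)
  q_anticomm i j := by simpa [sgenq] using RingQuot.mkRingHom_rel (SRel.qq i j)
  p_q i j := by simpa [sgenp, sgenq, apply_ite] using RingQuot.mkRingHom_rel (SRel.pq i j)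
  p_mul_e i := by simpa [sgenp, sgene] using RingQuot.mkRingHom_rel (SRel.pe i)
  f_mul_q i := by simpa [sgenf, sgenq] using RingQuot.mkRingHom_rel (SRel.fq i)
  f_mul_e := by simpa [sgenf, sgene] using RingQuot.mkRingHom_rel (SRel.fe (r := r))
  e_mul_f := by
    have h := RingQuot.mkRingHom_rel (SRel.ef (r := r))
    simp only [sgPtop, sgQtop, map_mul, map_list_prod, List.map_map] at h
    rwa [vacuumProj, List.reverse_reverse]

open EAlg

/-- The elements of `𝔈(r)` whose right multiplications represent the generators of `𝓔(r)`. -/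
noncomputable def genRep : SGen r → idealizer (JId r)
  | .p i => ⟨genP 0 i, genP_zero_mem_idealizer i⟩
  | .q i => ⟨genQ 0 i, genQ_zero_mem_idealizer i⟩
  | .e => ⟨genE, genE_mem_idealizer⟩
  | .f => ⟨genF * topProj r 0, genF_mul_topProj_mem_idealizer⟩

/-- The extension of `genRep` to words in the generators. The relations of `𝓔(r)` hold only modulo
`𝔍(r)`, hence the domain is the free algebra. -/
noncomputable def freeRep (r : ℕ) : FreeAlgebra ℤ (SGen r) →ₐ[ℤ] idealizer (JId r) :=
  FreeAlgebra.lift ℤ genRep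

theorem freeRep_sg (g : SGen r) : freeRep r (sg g) = genRep g :=
  FreeAlgebra.lift_ι_apply _ _

theorem freeRep_sgPtop_mul_sgQtop : (freeRep r (sgPtop r * sgQtop r) : EAlg r) = topProj r 0 := by
  simp only [sgPtop, sgQtop, map_mul, map_list_prod, List.map_map, Function.comp_def, freeRep_sg,
    genRep, Subring.coe_mul, SubmonoidClass.coe_list_prod, topProj, vacuumProj,
    List.reverse_reverse]

theorem genP_zero_mul_genE_mem_JId (i : Fin r) : genP 0 i * genE ∈ JId r := by
  rw [show genP 0 i * genE = genE * genP 1 i from (semiconjBy_genE_genP 1 i).eq.symm]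
  exact (JId r).mul_mem_left genE (genP_mem_JId one_pos i)

theorem genF_mul_topProj_mul_genE : genF * topProj r 0 * genE = topProj r 1 := by
  rw [mul_assoc, ← genE_mul_topProj_one, ← mul_assoc, genF_mul_genE, one_mul]

theorem freeRep_sub_mem_JId {x y : FreeAlgebra ℤ (SGen r)} (h : SRel r x y) :
    (freeRep r x - freeRep r y : EAlg r) ∈ JId r := by
  cases h with
  | psq i => simp [freeRep_sg, genRep, (isClifford 0).p_mul_self]
  | qsq i => simp [freeRep_sg, genRep, (isClifford 0).q_mul_self]
  | pp i j => simp [freeRep_sg, genRep, genP_anticomm]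
  | qq i j => simp [freeRep_sg, genRep, genQ_anticomm]
  | pq i j => split_ifs with hij <;> simp [freeRep_sg, genRep, genP_genQ, hij]
  | pe i => simpa [freeRep_sg, genRep] using genP_zero_mul_genE_mem_JId i
  | fq i => simp [freeRep_sg, genRep, mul_assoc, (isClifford 0).vacuumProj_mul_q]
  | fe => simpa [freeRep_sg, genRep, genF_mul_topProj_mul_genE] using topProj_one_sub_one_mem_JId
  | ef =>
    rw [freeRep_sgPtop_mul_sgQtop]
    simp [freeRep_sg, genRep, ← mul_assoc, genE_mul_genF]

/-- The homomorphism `𝓔(r) → End(Λ_r)ᵒᵖ` by right multiplication. -/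
noncomputable def toEnd (r : ℕ) : SAlg r →+* (Module.End (EAlg r) (LambdaMod r))ᵐᵒᵖ :=
  RingQuot.lift ⟨(rightMulEnd (JId r)).comp (freeRep r : _ →+* _),
    fun _ _ h => rightMulEnd_eq_iff.2 (freeRep_sub_mem_JId h)⟩

theorem toEnd_mk (x : FreeAlgebra ℤ (SGen r)) :
    toEnd r (RingQuot.mkRingHom _ x) = rightMulEnd _ (freeRep r x) :=
  RingQuot.lift_mkRingHom_apply _ _ _

theorem toEnd_mk_sg (g : SGen r) (x : EAlg r) :
    (toEnd r (RingQuot.mkRingHom _ (sg g))).unop (Submodule.Quotient.mk x) =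
      Submodule.Quotient.mk (x * genRep g) := by
  rw [toEnd_mk, rightMulEnd_unop_mk, freeRep_sg]

end SAlg

/-! ### Surjectivity -/

namespace SAlg

open EAlg

variable {r : ℕ}

/-- The map sending `s` to the value at the vacuum `1 ∈ Λ_r` of the endomorphism attached to
`s`. -/
noncomputable def evalOne (r : ℕ) : SAlg r →+ LambdaMod r where
  toFun s := (toEnd r s).unop (Submodule.Quotient.mk 1)
  map_zero' := by simp
  map_add' s t := by simp

theorem evalOne_mk_sg_mul (g : SGen r) (s : SAlg r) :
    evalOne r (RingQuot.mkRingHom _ (sg g) * s) = (genRep g : EAlg r) • evalOne r s := by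
  change (toEnd r (_ * s)).unop _ = _ • (toEnd r s).unop _
  rw [map_mul, MulOpposite.unop_mul, Module.End.mul_apply, toEnd_mk_sg, one_mul, ← map_smul,
    ← Submodule.Quotient.mk_smul, smul_eq_mul, mul_one]

theorem evalOne_sgenp_mul (i : Fin r) (s : SAlg r) :
    evalOne r (sgenp i * s) = (genP 0 i : EAlg r) • evalOne r s :=
  evalOne_mk_sg_mul (.p i) s

theorem evalOne_sgenq_mul (i : Fin r) (s : SAlg r) :
    evalOne r (sgenq i * s) = (genQ 0 i : EAlg r) • evalOne r s :=
  evalOne_mk_sg_mul (.q i) s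

theorem evalOne_sgene_mul (s : SAlg r) : evalOne r (sgene * s) = (genE : EAlg r) • evalOne r s :=
  evalOne_mk_sg_mul .e s

theorem evalOne_sgenf_mul (s : SAlg r) :
    evalOne r (sgenf * s) = (genF * topProj r 0) • evalOne r s :=
  evalOne_mk_sg_mul .f s

theorem smul_mem_range_evalOne {x : EAlg r} {s : SAlg r}
    (h : ∀ t, evalOne r (s * t) = x • evalOne r t) {v : LambdaMod r} (hv : v ∈ (evalOne r).range) :
    x • v ∈ (evalOne r).range := by
  obtain ⟨t, rfl⟩ := hv
  exact ⟨s * t, h t⟩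

theorem genE_pow_smul_mem_range_evalOne (n : ℕ) {v : LambdaMod r} (hv : v ∈ (evalOne r).range) :
    (genE ^ n : EAlg r) • v ∈ (evalOne r).range := by
  induction n with
  | zero => rwa [pow_zero, one_smul]
  | succ n ih =>
    rw [pow_succ', mul_smul]
    exact smul_mem_range_evalOne evalOne_sgene_mul ih

/-- What the families `a ↦ P_{a,i}` and `a ↦ Q_{a,i}` have in common: conjugation by `E` lowers the
index, the members of negative index anticommute with `Q_{0,j}`, and the member of index `0`
preserves the range of `evalOne`. -/
structure IsShiftFamily (X : ℤ → EAlg r) : Prop where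
  semiconjBy : ∀ a, SemiconjBy genE (X a) (X (a - 1))
  anticomm_genQ : ∀ a < 0, ∀ i, X a * genQ 0 i + genQ 0 i * X a = 0
  zero_smul_mem : ∀ v ∈ (evalOne r).range, X 0 • v ∈ (evalOne r).range

theorem isShiftFamily_genP (i : Fin r) : IsShiftFamily (genP · i) where
  semiconjBy a := semiconjBy_genE_genP a i
  anticomm_genQ _ ha j := genP_genQ_of_ne ha.ne i j
  zero_smul_mem _ := smul_mem_range_evalOne (evalOne_sgenp_mul i)

theorem isShiftFamily_genQ (i : Fin r) : IsShiftFamily (genQ · i) where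
  semiconjBy a := semiconjBy_genE_genQ a i
  anticomm_genQ a _ j := genQ_anticomm a 0 i j
  zero_smul_mem _ := smul_mem_range_evalOne (evalOne_sgenq_mul i)

theorem IsShiftFamily.neg_smul_mem {X : ℤ → EAlg r} (hX : IsShiftFamily X) (n : ℕ)
    {v : LambdaMod r} (hv : v ∈ (evalOne r).range) : X (-n) • v ∈ (evalOne r).range := by
  induction n generalizing v with
  | zero => simpa using hX.zero_smul_mem v hv
  | succ n ih =>
    obtain ⟨s, rfl⟩ := hv
    let K : AddSubgroup (SAlg r) :=
      (evalOne r).range.comap ((DistribSMul.toAddMonoidHom _ (X (-(n + 1 : ℕ)))).comp (evalOne r))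
    refine isExtClifford.mem_of_e_mul_mem (K := K) (fun i t ht => ?_) (fun t => ?_) s
    · change X (-(n + 1 : ℕ)) • evalOne r (sgenq i * t) ∈ (evalOne r).range
      have anticomm := hX.anticomm_genQ (-(n + 1 : ℕ)) (by lia) i
      rw [evalOne_sgenq_mul, ← mul_smul, eq_neg_of_add_eq_zero_left anticomm, neg_smul, mul_smul]
      exact neg_mem (smul_mem_range_evalOne (evalOne_sgenq_mul i) ht)
    · change X (-(n + 1 : ℕ)) • evalOne r (sgene * t) ∈ (evalOne r).range
      have comm := (hX.semiconjBy (-n)).eq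
      rw [← neg_add', ← Nat.cast_succ] at comm
      rw [evalOne_sgene_mul, ← mul_smul, ← comm, mul_smul]
      exact smul_mem_range_evalOne evalOne_sgene_mul (ih ⟨t, rfl⟩)

theorem genE_pow_smul_mem_range_mono {m n : ℕ} (hmn : m ≤ n) {v : LambdaMod r}
    (hv : (genE ^ m : EAlg r) • v ∈ (evalOne r).range) :
    (genE ^ n : EAlg r) • v ∈ (evalOne r).range := by
  rw [← Nat.sub_add_cancel hmn, pow_add, mul_smul]
  exact genE_pow_smul_mem_range_evalOne _ hv

/-- The vectors of `Λ_r` carried into the range of `evalOne` by some power of `E`. -/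
noncomputable def eventualRange (r : ℕ) : AddSubgroup (LambdaMod r) where
  carrier := {v | ∃ n : ℕ, (genE ^ n : EAlg r) • v ∈ (evalOne r).range}
  zero_mem' := ⟨0, by simp⟩
  add_mem' := by
    rintro v w ⟨m, hv⟩ ⟨n, hw⟩
    refine ⟨max m n, ?_⟩
    rw [smul_add]
    exact add_mem (genE_pow_smul_mem_range_mono (le_max_left m n) hv)
      (genE_pow_smul_mem_range_mono (le_max_right m n) hw)
  neg_mem' := by
    rintro v ⟨n, hv⟩
    exact ⟨n, by rw [smul_neg]; exact neg_mem hv⟩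

theorem IsShiftFamily.smul_mem_eventualRange {X : ℤ → EAlg r} (hX : IsShiftFamily X) (a : ℤ)
    {v : LambdaMod r} (hv : v ∈ eventualRange r) : X a • v ∈ eventualRange r := by
  obtain ⟨n, hv⟩ := hv
  refine ⟨n + a.toNat, ?_⟩
  obtain ⟨k, hk⟩ : ∃ k : ℕ, a - (n + a.toNat : ℕ) = -k :=
    Int.exists_eq_neg_ofNat (by lia)
  rw [← mul_smul, (semiconjBy_genE_pow hX.semiconjBy _ a).eq, hk, mul_smul]
  exact hX.neg_smul_mem k (genE_pow_smul_mem_range_mono (Nat.le_add_right n _) hv)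

theorem smul_mem_eventualRange (x : EAlg r) :
    ∀ v ∈ eventualRange r, x • v ∈ eventualRange r := by
  induction x using EAlg.induction with
  | intCast n => exact fun v hv => by simpa only [Int.cast_smul_eq_zsmul] using zsmul_mem hv n
  | gen g =>
    rintro v hv
    cases g with
    | P a i => exact (isShiftFamily_genP i).smul_mem_eventualRange a hv
    | Q a i => exact (isShiftFamily_genQ i).smul_mem_eventualRange a hv
    | E =>
      obtain ⟨n, hv⟩ := hv
      refine ⟨n, ?_⟩
      change genE ^ n • genE • v ∈ _
      rw [← mul_smul, ← pow_succ]
      exact genE_pow_smul_mem_range_mono n.le_succ hv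
    | F =>
      obtain ⟨n, hv⟩ := hv
      refine ⟨n + 1, ?_⟩
      change genE ^ (n + 1) • genF • v ∈ _
      rwa [← mul_smul, pow_succ, mul_assoc, genE_mul_genF, mul_one]
  | add x y hx hy =>
    intro v hv
    rw [add_smul]
    exact add_mem (hx v hv) (hy v hv)
  | mul x y hx hy =>
    intro v hv
    rw [mul_smul]
    exact hx _ (hy v hv)

theorem eventualRange_eq_top : eventualRange r = ⊤ := by
  refine (AddSubgroup.eq_top_iff' _).2 fun v => ?_
  obtain ⟨x, rfl⟩ := Submodule.Quotient.mk_surjective _ v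
  have h := smul_mem_eventualRange x (Submodule.Quotient.mk 1) ⟨0, 1, by simp [evalOne]⟩
  rwa [← Submodule.Quotient.mk_smul, smul_eq_mul, mul_one] at h

theorem evalOne_sgene_mul_sgenf_mul (s : SAlg r) :
    evalOne r (sgene * (sgenf * s)) = topProj r 0 • evalOne r s := by
  rw [evalOne_sgene_mul, evalOne_sgenf_mul, ← mul_smul, ← mul_assoc, genE_mul_genF, one_mul]

theorem mem_range_evalOne_of_genE_smul_mem {v : LambdaMod r}
    (hv : ∀ i, (genP 1 i : EAlg r) • v = 0) (hE : (genE : EAlg r) • v ∈ (evalOne r).range) :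
    v ∈ (evalOne r).range := by
  obtain ⟨s, hs⟩ := hE
  have hP (i : Fin r) : (genP 0 i : EAlg r) • evalOne r s = 0 := by
    rw [hs, ← mul_smul, show genP 0 i * genE = genE * genP 1 i from
      (semiconjBy_genE_genP 1 i).eq.symm, mul_smul, hv, smul_zero]
  have fixed : topProj r 0 • evalOne r s = evalOne r s :=
    (isClifford 0).vacuumProj_smul_of_p_smul_eq_zero hP
      (List.nodup_reverse.2 (List.nodup_finRange r))
  refine ⟨sgenf * s, ?_⟩
  calc evalOne r (sgenf * s)
      = (genF : EAlg r) • evalOne r (sgene * (sgenf * s)) := by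
        rw [evalOne_sgene_mul, ← mul_smul, genF_mul_genE, one_smul]
    _ = (genF : EAlg r) • (genE : EAlg r) • v := by rw [evalOne_sgene_mul_sgenf_mul, fixed, hs]
    _ = v := by rw [← mul_smul, genF_mul_genE, one_smul]

theorem mem_range_evalOne_of_genP_smul_eq_zero {v : LambdaMod r}
    (hv : ∀ a > 0, ∀ i, (genP a i : EAlg r) • v = 0) : v ∈ (evalOne r).range := by
  obtain ⟨n, hn⟩ : v ∈ eventualRange r := eventualRange_eq_top ▸ AddSubgroup.mem_top v
  induction n with
  | zero => simpa using hn
  | succ n ih =>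
    refine ih (mem_range_evalOne_of_genE_smul_mem (fun i => ?_) ?_)
    · have comm := semiconjBy_genE_pow (fun a => semiconjBy_genE_genP a i) n (1 + n)
      rw [add_sub_cancel_right] at comm
      rw [← mul_smul, ← comm.eq, mul_smul, hv _ (by lia), smul_zero]
    · rwa [← mul_smul, ← pow_succ']

theorem toEnd_surjective : Function.Surjective (toEnd r) := by
  intro φ
  have hφ : φ.unop (Submodule.Quotient.mk 1) ∈ (evalOne r).range :=
    mem_range_evalOne_of_genP_smul_eq_zero fun a ha i => by
      rw [← map_smul, genP_smul_mk_one ha, map_zero]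
  obtain ⟨s, hs⟩ := hφ
  exact ⟨s, MulOpposite.unop_injective (end_quotient_ext hs)⟩

end SAlg

/-! ### Fock representation and injectivity -/

section Germ

open Filter

instance smulCommClass_germ {α A : Type*} [Semigroup A] {l : Filter α} :
    SMulCommClass (Germ l A) Aᵐᵒᵖ (Germ l A) where
  smul_comm g c h := by
    induction g, h using Germ.inductionOn₂ with
    | _ u v => exact congrArg _ (funext fun k => (mul_assoc (u k) (v k) c.unop).symm)

/-- Germs at `+∞` of functions on `ℤ`. -/
abbrev AtTopGerm (A : Type*) : Type _ := Germ (atTop : Filter ℤ) A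

/-- Left multiplication of germs, linear for the right `A`-module structure. -/
noncomputable abbrev germMulLeft (A : Type*) [Semiring A] :
    AtTopGerm A →+* Module.End Aᵐᵒᵖ (AtTopGerm A) :=
  Module.toModuleEnd Aᵐᵒᵖ (AtTopGerm A)

/-- Translation of germs, `(germShift A n g) k = g (k + n)`. -/
noncomputable def germShift (A : Type*) [Semiring A] (n : ℤ) : Module.End Aᵐᵒᵖ (AtTopGerm A) where
  toFun g := g.compTendsto (· + n) (tendsto_atTop_add_const_right _ n tendsto_id)
  map_add' g h := by
    induction g, h using Germ.inductionOn₂ with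
    | _ u v => rfl
  map_smul' c g := by
    induction g using Germ.inductionOn with
    | _ u => rfl

variable {A : Type*} [Semiring A]

theorem germShift_coe (n : ℤ) (u : ℤ → A) :
    germShift A n (Germ.ofFun u) = Germ.ofFun fun k => u (k + n) :=
  rfl

theorem germShift_mul_germShift_neg (n : ℤ) : germShift A n * germShift A (-n) = 1 := by
  ext g
  induction g using Germ.inductionOn with
  | _ u => simp [germShift_coe]

end Germ

section Fock

open Filter

variable {A : Type*} [Ring A] {r : ℕ} (p q : Fin r → A) (e f : A)

/-- Left multiplication by the germ of `k ↦ σ^(k - a) x`, where `σ` is `cliffordShift`. The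
truncation in `(k - a).toNat` is invisible, since only large `k` matter. -/
noncomputable def cliffordOp (a : ℤ) (x : A) : Module.End Aᵐᵒᵖ (AtTopGerm A) :=
  germMulLeft A (Germ.ofFun fun k => (cliffordShift p q e f)^[(k - a).toNat] x)

/-- The action of the generators of `𝔈(r)` on germs of functions with values in a ring satisfying
the relations of `𝓔(r)`. -/
noncomputable def fockGen : EGen r → Module.End Aᵐᵒᵖ (AtTopGerm A)
  | .P a i => cliffordOp p q e f a (p i)
  | .Q a i => cliffordOp p q e f a (q i)
  | .E => germShift A 1
  | .F => germShift A (-1)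

/-- The germ of `k ↦ e ^ k`, a vacuum vector for the action `fockGen`. -/
noncomputable def vacuumGerm : AtTopGerm A :=
  Germ.ofFun fun k => e ^ k.toNat

theorem germShift_mul_cliffordOp (a : ℤ) (x : A) :
    germShift A 1 * cliffordOp p q e f a x = cliffordOp p q e f (a - 1) x * germShift A 1 := by
  ext g
  induction g using Germ.inductionOn with
  | _ u =>
    refine congrArg _ (funext fun k => ?_)
    change _^[(k + 1 - a).toNat] x * u (k + 1) = _^[(k - (a - 1)).toNat] x * u (k + 1)
    rw [sub_sub_eq_add_sub]

theorem germShift_one_vacuumGerm :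
    germShift A 1 (vacuumGerm e) = MulOpposite.op e • vacuumGerm e := by
  refine Germ.coe_eq.2 ?_
  filter_upwards [eventually_ge_atTop 0] with k hk
  change e ^ (k + 1).toNat = e ^ k.toNat * e
  rw [← pow_succ, Int.toNat_add hk zero_le_one, Int.toNat_one]

end Fock

namespace IsExtClifford

open Filter

variable {A : Type*} [Ring A] {r : ℕ} {p q : Fin r → A} {e f : A} (H : IsExtClifford p q e f)
include H

local notation "σ" => cliffordShift p q e f
local notation "τ" => cliffordOp p q e f

theorem cliffordOp_mul_self (a : ℤ) {x : A} (h : x * x = 0) : τ a x * τ a x = 0 := by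
  rw [cliffordOp, ← map_mul, ← map_zero (germMulLeft A)]
  exact congrArg _ (congrArg _ (funext fun k => H.iterate_cliffordShift_mul_self h (k - a).toNat))

theorem cliffordOp_anticomm {x y : A} {c : ℤ} (h : x * y + y * x = c)
    (hx : ∀ z, x * σ z + σ z * x = 0) (hy : ∀ z, y * σ z + σ z * y = 0) (a b : ℤ) :
    τ a x * τ b y + τ b y * τ a x = ((if a = b then c else 0 : ℤ) : Module.End Aᵐᵒᵖ _) := by
  rw [cliffordOp, cliffordOp, ← map_mul, ← map_mul, ← map_add,
    ← map_intCast (germMulLeft A)]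
  refine congrArg _ (Germ.coe_eq.2 ?_)
  filter_upwards [eventually_ge_atTop a, eventually_ge_atTop b] with k ha hb
  have hab : (k - a).toNat = (k - b).toNat ↔ a = b := by lia
  have anticomm := H.iterate_cliffordShift_anticomm h hx hy (k - a).toNat (k - b).toNat
  simp only [hab] at anticomm
  exact anticomm

theorem fockGen_rel {x y : FreeAlgebra ℤ (EGen r)} (h : ERel r x y) :
    FreeAlgebra.lift ℤ (fockGen p q e f) x = FreeAlgebra.lift ℤ (fockGen p q e f) y := by
  cases h with
  | Psq a i => simpa [eg, fockGen] using H.cliffordOp_mul_self a (H.p_mul_self i)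
  | Qsq a i => simpa [eg, fockGen] using H.cliffordOp_mul_self a (H.q_mul_self i)
  | EP a i => simpa [eg, fockGen] using germShift_mul_cliffordOp p q e f a (p i)
  | EQ a i => simpa [eg, fockGen] using germShift_mul_cliffordOp p q e f a (q i)
  | PP a b i j =>
    simpa [eg, fockGen] using H.cliffordOp_anticomm (c := 0) (by simpa using H.p_anticomm i j)
      (H.p_anticomm_cliffordShift i) (H.p_anticomm_cliffordShift j) a b
  | QQ a b i j =>
    simpa [eg, fockGen] using H.cliffordOp_anticomm (c := 0) (by simpa using H.q_anticomm i j)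
      (H.q_anticomm_cliffordShift i) (H.q_anticomm_cliffordShift j) a b
  | PQ a b i j =>
    simpa [eg, fockGen, apply_ite, ← ite_and, and_comm] using
      H.cliffordOp_anticomm (c := if i = j then 1 else 0) (by simpa using H.p_q i j)
        (H.p_anticomm_cliffordShift i) (H.q_anticomm_cliffordShift j) a b
  | EFone => simpa [eg, fockGen] using germShift_mul_germShift_neg (A := A) 1
  | FEone => simpa [eg, fockGen] using germShift_mul_germShift_neg (A := A) (-1)

/-- The Fock representation of `𝔈(r)` on germs. -/
noncomputable def fock : EAlg r →+* Module.End Aᵐᵒᵖ (AtTopGerm A) :=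
  RingQuot.lift ⟨(FreeAlgebra.lift ℤ (fockGen p q e f) : _ →+* _), fun _ _ => H.fockGen_rel⟩

theorem fock_mk_eg (g : EGen r) : H.fock (RingQuot.mkRingHom _ (eg g)) = fockGen p q e f g :=
  (RingQuot.lift_mkRingHom_apply _ _ _).trans (FreeAlgebra.lift_ι_apply _ _)

theorem cliffordOp_vacuumGerm {a : ℤ} (ha : 0 ≤ a) (x : A) :
    τ a x (vacuumGerm e) = Germ.ofFun fun k => e ^ (k - a).toNat * (x * e ^ a.toNat) := by
  refine Germ.coe_eq.2 ?_
  filter_upwards [eventually_ge_atTop a] with k hk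
  have hk : k.toNat = (k - a).toNat + a.toNat := by lia
  change _ * e ^ k.toNat = _
  rw [hk, pow_add, ← mul_assoc, H.iterate_cliffordShift_mul_e_pow, mul_assoc]

theorem cliffordOp_zero_vacuumGerm (x : A) :
    τ 0 x (vacuumGerm e) = MulOpposite.op x • vacuumGerm e := by
  rw [H.cliffordOp_vacuumGerm le_rfl]
  exact congrArg _ (funext fun k => by simp)

theorem fock_genP_vacuumGerm {a : ℤ} (ha : 0 < a) (i : Fin r) :
    H.fock (genP a i) (vacuumGerm e) = 0 := by
  rw [genP, fock_mk_eg, fockGen, H.cliffordOp_vacuumGerm ha.le]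
  obtain ⟨n, hn⟩ : ∃ n, a.toNat = n + 1 := Nat.exists_eq_add_one.2 (by lia)
  exact congrArg _ (funext fun k => by simp [hn, pow_succ', ← mul_assoc (p i), H.p_mul_e])

theorem eq_zero_of_op_smul_vacuumGerm_eq_zero {s : A} (h : MulOpposite.op s • vacuumGerm e = 0) :
    s = 0 := by
  obtain ⟨k, hk⟩ := (Germ.coe_eq.1 h).exists
  have hk : e ^ k.toNat * s = 0 := hk
  rw [← one_mul s, ← pow_mul_pow_eq_one k.toNat H.f_mul_e, mul_assoc, hk, mul_zero]

theorem fock_vacuumGerm_eq_zero_of_mem_JId {x : EAlg r} (hx : x ∈ JId r) :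
    H.fock x (vacuumGerm e) = 0 := by
  induction hx using Submodule.span_induction with
  | mem x hx =>
    obtain ⟨a, i, ha, rfl⟩ := hx
    exact H.fock_genP_vacuumGerm ha i
  | zero => simp
  | add x y _ _ hx hy => simp [hx, hy]
  | smul c x _ hx => simp [hx]

theorem fock_mul_vacuumGerm {x y : EAlg r} {s t : A}
    (hx : H.fock x (vacuumGerm e) = MulOpposite.op s • vacuumGerm e)
    (hy : H.fock y (vacuumGerm e) = MulOpposite.op t • vacuumGerm e) :
    H.fock (x * y) (vacuumGerm e) = MulOpposite.op (s * t) • vacuumGerm e := by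
  rw [map_mul, Module.End.mul_apply, hy, map_smul, hx, ← mul_smul, MulOpposite.op_mul]

theorem fock_list_prod_vacuumGerm {ι : Type*} {x : ι → EAlg r} {s : ι → A}
    (h : ∀ i, H.fock (x i) (vacuumGerm e) = MulOpposite.op (s i) • vacuumGerm e) (l : List ι) :
    H.fock (l.map x).prod (vacuumGerm e) = MulOpposite.op (l.map s).prod • vacuumGerm e := by
  induction l with
  | nil => simp
  | cons i l ih => simpa only [List.map_cons, List.prod_cons] using H.fock_mul_vacuumGerm (h i) ih

theorem fock_genP_zero_vacuumGerm (i : Fin r) :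
    H.fock (genP 0 i) (vacuumGerm e) = MulOpposite.op (p i) • vacuumGerm e := by
  rw [genP, fock_mk_eg]
  exact H.cliffordOp_zero_vacuumGerm (p i)

theorem fock_genQ_zero_vacuumGerm (i : Fin r) :
    H.fock (genQ 0 i) (vacuumGerm e) = MulOpposite.op (q i) • vacuumGerm e := by
  rw [genQ, fock_mk_eg]
  exact H.cliffordOp_zero_vacuumGerm (q i)

theorem fock_genE_vacuumGerm :
    H.fock genE (vacuumGerm e) = MulOpposite.op e • vacuumGerm e := by
  rw [genE, fock_mk_eg]
  exact germShift_one_vacuumGerm e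

theorem fock_topProj_vacuumGerm :
    H.fock (EAlg.topProj r 0) (vacuumGerm e) = MulOpposite.op (e * f) • vacuumGerm e := by
  rw [H.e_mul_f]
  exact H.fock_mul_vacuumGerm (H.fock_list_prod_vacuumGerm H.fock_genP_zero_vacuumGerm _)
    (H.fock_list_prod_vacuumGerm H.fock_genQ_zero_vacuumGerm _)

theorem fock_genF_mul_topProj_vacuumGerm :
    H.fock (genF * EAlg.topProj r 0) (vacuumGerm e) = MulOpposite.op f • vacuumGerm e := by
  rw [map_mul, Module.End.mul_apply, H.fock_topProj_vacuumGerm, MulOpposite.op_mul, mul_smul,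
    ← H.fock_genE_vacuumGerm, map_smul, ← Module.End.mul_apply, ← map_mul, EAlg.genF_mul_genE,
    map_one, Module.End.one_apply]

end IsExtClifford

namespace SAlg

variable {r : ℕ}

theorem fock_freeRep_vacuumGerm (x : FreeAlgebra ℤ (SGen r)) :
    isExtClifford.fock (freeRep r x : EAlg r) (vacuumGerm sgene) =
      MulOpposite.op (RingQuot.mkRingHom (SRel r) x) • vacuumGerm sgene := by
  induction x using FreeAlgebra.induction with
  | grade0 n =>
    simpa using (zsmul_eq_mul _ _).symm.trans (Int.cast_smul_eq_zsmul (SAlg r)ᵐᵒᵖ n _).symm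
  | grade1 g =>
    change isExtClifford.fock (freeRep r (sg g) : EAlg r) _ = _
    rw [freeRep_sg]
    cases g with
    | p i => exact isExtClifford.fock_genP_zero_vacuumGerm i
    | q i => exact isExtClifford.fock_genQ_zero_vacuumGerm i
    | e => exact isExtClifford.fock_genE_vacuumGerm
    | f => exact isExtClifford.fock_genF_mul_topProj_vacuumGerm
  | mul x y hx hy => simpa using isExtClifford.fock_mul_vacuumGerm hx hy
  | add x y hx hy => simp [hx, hy, add_smul]

theorem toEnd_injective : Function.Injective (toEnd r) := by
  refine (injective_iff_map_eq_zero _).2 fun s hs => ?_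
  obtain ⟨x, rfl⟩ := RingQuot.mkRingHom_surjective _ s
  have mem : (freeRep r x : EAlg r) ∈ JId r := by
    rw [toEnd_mk, ← map_zero (rightMulEnd (JId r)), rightMulEnd_eq_iff] at hs
    simpa using hs
  refine isExtClifford.eq_zero_of_op_smul_vacuumGerm_eq_zero ?_
  rw [← fock_freeRep_vacuumGerm]
  exact isExtClifford.fock_vacuumGerm_eq_zero_of_mem_JId mem

end SAlg

/-!
Statement 13: `𝓔(r) ≅ End_{𝔈(r)}(Λ_r)^{op}` as unital ℤ-algebras, sending `p_i`, `q_i`,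
`e`, `f` to the endomorphisms of `Λ_r` induced by right multiplication by `P_{0,i}`,
`Q_{0,i}`, `E`, and `F·P_{0,[r]}·Q_{0,[r]}` respectively.
-/

theorem stmt_13 {r : ℕ} (hr : 0 < r) :
    ∃ Φ : SAlg r ≃ₐ[ℤ] (Module.End (EAlg r) (LambdaMod r))ᵐᵒᵖ,
      (∀ (i : Fin r) (x : EAlg r),
        (Φ (sgenp i)).unop (Submodule.Quotient.mk x) =
          Submodule.Quotient.mk (x * genP 0 i)) ∧
      (∀ (i : Fin r) (x : EAlg r),
        (Φ (sgenq i)).unop (Submodule.Quotient.mk x) =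
          Submodule.Quotient.mk (x * genQ 0 i)) ∧
      (∀ x : EAlg r,
        (Φ sgene).unop (Submodule.Quotient.mk x) =
          Submodule.Quotient.mk (x * genE)) ∧
      (∀ x : EAlg r,
        (Φ sgenf).unop (Submodule.Quotient.mk x) =
          Submodule.Quotient.mk
            (x * (genF * genPI 0 Finset.univ * genQI 0 Finset.univ))) := by
  let Φ := AlgEquiv.ofBijective (SAlg.toEnd r).toIntAlgHom
    ⟨SAlg.toEnd_injective, SAlg.toEnd_surjective⟩
  refine ⟨Φ, fun i => SAlg.toEnd_mk_sg (.p i), fun i => SAlg.toEnd_mk_sg (.q i),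
    SAlg.toEnd_mk_sg .e, fun x => ?_⟩
  rw [mul_assoc genF, EAlg.genPI_univ_mul_genQI_univ]
  exact SAlg.toEnd_mk_sg .f x
end
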